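/- arXiv:0707.1475 — 3 statements merged into one kernel-verified Lean document; each statement's English description precedes it below -/
import Mathlib

section
/- Let R_{abcd} have Riemann symmetries on Minkowski space, n^a a unit timelike vector, and define Y_{ac} = R_{abcd} n^b n^d, Z_{ac} = *R_{abcd} n^b n^d, X_{ac} = *R*_{abcd} n^b n^d. Then the orthogonal splitting of the Riemann tensor holds: R_{abcd} = 2 n_c n_{[a} Y_{b]d} + 2 h_{a[d} X_{c]b} + 2 n_d n_{[b} Y_{a]c} + 2 n_{[d} Z^e{}_{c]} ε_{abe} + 2 n_{[b} Z^e{}_{a]} ε_{cde} + h_{bd} (h_{ac} X^e{}_e − X_{ac}) + h_{bc} (X_{ad} − h_{ad} X^e{}_e). -/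
noncomputable section

/-- The Minkowski metric `diag(-1,1,1,1)` on `ℝ⁴`. -/
def gm : Fin 4 → Fin 4 → ℝ := fun a b => if a = b then (if a = 0 then -1 else 1) else 0

/-- The totally antisymmetric volume form with `η₀₁₂₃ = 1`. -/
def eta (a b c d : Fin 4) : ℝ :=
  ((((b.val : ℤ) - a.val).sign * ((c.val : ℤ) - a.val).sign * ((d.val : ℤ) - a.val).sign *
    ((c.val : ℤ) - b.val).sign * ((d.val : ℤ) - b.val).sign * ((d.val : ℤ) - c.val).sign : ℤ) : ℝ)

/-- Index lowering: `n_a = g_{ab} n^b`. -/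
def lo (n : Fin 4 → ℝ) (a : Fin 4) : ℝ := ∑ b, gm a b * n b

/-- Spatial metric `h_{ab} = g_{ab} + n_a n_b`. -/
def hm (n : Fin 4 → ℝ) (a b : Fin 4) : ℝ := gm a b + lo n a * lo n b

/-- Spatial volume form `ε_{abc} = n^d η_{dabc}` of a unit timelike `n`. -/
def eps (n : Fin 4 → ℝ) (a b c : Fin 4) : ℝ := ∑ d, n d * eta d a b c

/-- A rank-4 tensor. -/
abbrev Tensor4 := Fin 4 → Fin 4 → Fin 4 → Fin 4 → ℝ

/-- `R_{abcd}` has the symmetries of a Riemann tensor. -/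
structure RiemannSymm (R : Tensor4) : Prop where
  antisymm₁ : ∀ a b c d, R a b c d = - R b a c d
  antisymm₂ : ∀ a b c d, R a b c d = - R a b d c
  pairSymm : ∀ a b c d, R a b c d = R c d a b
  firstBianchi : ∀ a b c d,
    (1/6 : ℝ) * (R a b c d + R b c a d + R c a b d
      - R b a c d - R a c b d - R c b a d) = 0

/-- Left dual `*R_{abcd} = ½ η_{abpq} R^{pq}{}_{cd}`. -/
def dualL (R : Tensor4) (a b c d : Fin 4) : ℝ :=
  (1/2) * ∑ p, ∑ q, eta a b p q * (∑ r, ∑ s, gm p r * gm q s * R r s c d)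

/-- Right dual `R*_{abcd} = ½ η_{pqcd} R_{ab}{}^{pq}`. -/
def dualR (R : Tensor4) (a b c d : Fin 4) : ℝ :=
  (1/2) * ∑ p, ∑ q, eta p q c d * (∑ r, ∑ s, gm p r * gm q s * R a b r s)

/-- Double dual `*R*_{abcd} = ½ η_{ab}{}^{pq} R*_{pqcd}`. -/
def dualLR (R : Tensor4) : Tensor4 := dualL (dualR R)

/-- `Y_{ac} = R_{abcd} n^b n^d`. -/
def Yt (R : Tensor4) (n : Fin 4 → ℝ) (a c : Fin 4) : ℝ := ∑ b, ∑ d, R a b c d * n b * n d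

/-- `Z_{ac} = *R_{abcd} n^b n^d`. -/
def Zt (R : Tensor4) (n : Fin 4 → ℝ) (a c : Fin 4) : ℝ := ∑ b, ∑ d, dualL R a b c d * n b * n d

/-- `X_{ac} = *R*_{abcd} n^b n^d`. -/
def Xt (R : Tensor4) (n : Fin 4 → ℝ) (a c : Fin 4) : ℝ := ∑ b, ∑ d, dualLR R a b c d * n b * n d

/-!
Relative to a unit timelike `n`, an antisymmetric `F` splits into an electric and a magnetic part:
`F_{ab} = n_a E_b - n_b E_a - ε_{abe} H^e` with `E_a = F_{ab} n^b` and `H_a = ⋆F_{ab} n^b`, since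
contracting `ε` with `H` gives back, up to sign, the projection of `F` orthogonal to `n`. Splitting
both index pairs of `R` this way produces `Y`, `Z`, the analogue of `Z` for the right dual, and
`ε_{abe} ε_{cdf} X^{ef}`. By pair symmetry the two duals carry the same information and `X` is
symmetric and orthogonal to `n`. The product of two spatial volume forms is
`ε_{abc} ε_{def} = det (h_{ij})`, `i ∈ {a, b, c}`, `j ∈ {d, e, f}`: the Gram determinant
`-det ⟨u_i, v_j⟩` for `u = (n, e_a, e_b, e_c)` and `v = (n, e_d, e_e, e_f)` is bordered by
`⟨n, n⟩ = -1`, and the Schur complement of that entry is `h`.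
-/

open Matrix

theorem det_neg_one_bordered {R : Type*} [CommRing R] {m : ℕ} (u v : Fin m → R)
    (M : Matrix (Fin m) (Fin m) R) :
    (of (vecCons (vecCons (-1) v) fun i => vecCons (u i) (M i))).det =
      -(M + vecMulVec u v).det := by
  let e := (finSuccEquiv m).trans (Equiv.optionEquivSumPUnit (Fin m))
  have blocks : (of (vecCons (vecCons (-1) v) fun i => vecCons (u i) (M i))) =
      (fromBlocks M (replicateCol Unit u) (replicateRow Unit v) (-1)).submatrix e e := by
    ext i j
    cases i using Fin.cases <;> cases j using Fin.cases <;> simp [e]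
  rw [blocks, det_submatrix_equiv_self]
  let : Invertible (-1 : Matrix Unit Unit R) := ⟨-1, by simp, by simp⟩
  have inverse_neg_one : ⅟(-1 : Matrix Unit Unit R) = -1 := rfl
  rw [det_fromBlocks₂₂, inverse_neg_one]
  simp [vecMulVec_eq Unit]

theorem mul_mul_transpose_apply {m R : Type*} [Fintype m] [CommSemiring R] (A U : Matrix m m R)
    (a b : m) : (A * U * Aᵀ) a b = ∑ e, ∑ f, A a e * A b f * U e f := by
  simp only [mul_apply, transpose_apply, Finset.sum_mul]
  rw [Finset.sum_comm]
  simp only [mul_right_comm]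

theorem dotProduct_mulVec_self_eq_zero {m R : Type*} [Fintype m] [CommRing R] [NoZeroDivisors R]
    [CharZero R] {F : Matrix m m R} (hF : Fᵀ = -F) (v : m → R) : v ⬝ᵥ F *ᵥ v = 0 := by
  have eq_neg : v ⬝ᵥ F *ᵥ v = -(v ⬝ᵥ F *ᵥ v) := by
    conv_lhs => rw [dotProduct_mulVec, ← mulVec_transpose, hF, neg_mulVec, neg_dotProduct,
      dotProduct_comm]
  exact self_eq_neg.mp eq_neg

theorem eta_swap_left (a b c d : Fin 4) : eta b a c d = -eta a b c d := by
  unfold eta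
  norm_cast
  revert a b c d
  decide

theorem eta_rotate_right (a b c d : Fin 4) : eta a c d b = eta a b c d := by
  unfold eta
  norm_cast
  revert a b c d
  decide

theorem eta_swap_pairs (a b c d : Fin 4) : eta c d a b = eta a b c d := by
  unfold eta
  norm_cast
  revert a b c d
  decide

theorem eta_eq_det (a b c d : Fin 4) :
    eta a b c d = ((1 : Matrix (Fin 4) (Fin 4) ℝ).submatrix ![a, b, c, d] id).det := by
  rw [← map_one (Int.castRingHom ℝ).mapMatrix, RingHom.mapMatrix_apply, submatrix_map,
    ← RingHom.mapMatrix_apply, ← RingHom.map_det, eta, eq_intCast, Int.cast_inj]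
  revert a b c d
  decide +kernel

theorem eps_eq_det (n : Fin 4 → ℝ) (a b c : Fin 4) :
    eps n a b c = (of (vecCons n fun i => Pi.single (![a, b, c] i) 1)).det := by
  have single_rows (d : Fin 4) : (1 : Matrix (Fin 4) (Fin 4) ℝ).submatrix ![d, a, b, c] id =
      of (vecCons (Pi.single d 1) fun i => Pi.single (![a, b, c] i) 1) := by
    ext i j
    cases i using Fin.cases
    · exact one_eq_pi_single
    · simp [one_eq_pi_single]
  simp only [eps, eta_eq_det, single_rows]
  simp [det_succ_row_zero (of _), Pi.single_apply, submatrix, mul_left_comm (n _), mul_assoc]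

theorem of_gm_eq_diagonal : of gm = diagonal ![-1, 1, 1, 1] := by
  ext a b
  fin_cases a <;> fin_cases b <;> simp [gm]

theorem transpose_of_gm : (of gm)ᵀ = of gm := by
  rw [of_gm_eq_diagonal, diagonal_transpose]

theorem of_gm_mul_of_gm : of gm * of gm = 1 := by
  rw [of_gm_eq_diagonal, diagonal_mul_diagonal, ← diagonal_one]
  congr 1
  ext a
  fin_cases a <;> simp

theorem det_of_gm : (of gm).det = -1 := by
  simp [of_gm_eq_diagonal, Fin.prod_univ_four]

theorem of_gm_mul_mul_of_gm_apply (F : Matrix (Fin 4) (Fin 4) ℝ) (p q : Fin 4) :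
    (of gm * F * of gm) p q = ∑ r, ∑ s, gm p r * gm q s * F r s := by
  simpa only [transpose_of_gm, of_apply] using mul_mul_transpose_apply (of gm) F p q

theorem lo_eq_mulVec (v : Fin 4 → ℝ) : lo v = of gm *ᵥ v := rfl

theorem lo_single (a b : Fin 4) : lo (Pi.single b 1) a = gm a b := by
  simp [lo_eq_mulVec]

theorem lo_dotProduct_comm (u v : Fin 4 → ℝ) : lo u ⬝ᵥ v = u ⬝ᵥ lo v := by
  rw [lo_eq_mulVec, lo_eq_mulVec, dotProduct_mulVec, ← mulVec_transpose, transpose_of_gm]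

theorem dotProduct_lo (u v : Fin 4 → ℝ) : u ⬝ᵥ lo v = ∑ a, ∑ b, gm a b * u a * v b := by
  simp only [dotProduct, lo, Finset.mul_sum, mul_left_comm (u _), mul_assoc]

theorem det_of_mul_det_of (u v : Fin 4 → Fin 4 → ℝ) :
    (of u).det * (of v).det = -(of fun i j => u i ⬝ᵥ lo (v j)).det := by
  have gram : (of fun i j => u i ⬝ᵥ lo (v j)) = of u * (of gm * (of v)ᵀ) := by
    ext i j
    rfl
  rw [gram, det_mul, det_mul, det_of_gm, det_transpose]
  ring

theorem sum_raise_mul (s t : ℝ) (u v w : Fin 4 → ℝ) :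
    ∑ e, ∑ f, (s * gm e f * u f - t * gm e f * v f) * w e =
      s * (w ⬝ᵥ lo u) - t * (w ⬝ᵥ lo v) := by
  simp only [dotProduct, lo, Finset.mul_sum, ← Finset.sum_sub_distrib]
  exact Finset.sum_congr rfl fun e _ => Finset.sum_congr rfl fun f _ => by ring

section UnitNormal

variable {n : Fin 4 → ℝ}

theorem eps_mul_eps (hn : n ⬝ᵥ lo n = -1) (a b c d e f : Fin 4) :
    eps n a b c * eps n d e f = ((of (hm n)).submatrix ![a, b, c] ![d, e, f]).det := by
  have gram :
      (of fun i j => (vecCons n fun i => Pi.single (![a, b, c] i) 1) i ⬝ᵥ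
        lo ((vecCons n fun i => Pi.single (![d, e, f] i) 1) j)) =
      of (vecCons (vecCons (-1) (lo n ∘ ![d, e, f])) fun i =>
        vecCons (lo n (![a, b, c] i)) fun j => gm (![a, b, c] i) (![d, e, f] j)) := by
    ext i j
    cases i using Fin.cases <;> cases j using Fin.cases <;>
      simp [hn, lo_single, ← lo_dotProduct_comm n (Pi.single _ _)]
  rw [eps_eq_det, eps_eq_det, det_of_mul_det_of, gram, neg_eq_iff_eq_neg]
  exact det_neg_one_bordered _ _ _

theorem of_hm_eq : of (hm n) = of gm + vecMulVec (lo n) (lo n) := rfl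

theorem transpose_of_hm : (of (hm n))ᵀ = of (hm n) := by
  rw [of_hm_eq, transpose_add, transpose_of_gm, transpose_vecMulVec]

theorem hm_comm (a b : Fin 4) : hm n a b = hm n b a :=
  congr_fun₂ (transpose_of_hm (n := n)).symm a b

/-- The mixed tensor `h_a{}^b`, which projects onto the orthogonal complement of `n`. -/
def spatialProj (n : Fin 4 → ℝ) : Matrix (Fin 4) (Fin 4) ℝ := 1 + vecMulVec (lo n) n

theorem of_hm_mul_of_gm : of (hm n) * of gm = spatialProj n := by
  rw [spatialProj, of_hm_eq, add_mul, of_gm_mul_of_gm, vecMulVec_mul, ← mulVec_transpose,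
    transpose_of_gm, lo_eq_mulVec, mulVec_mulVec, of_gm_mul_of_gm, one_mulVec]

theorem spatialProj_mul_of_hm (hn : n ⬝ᵥ lo n = -1) : spatialProj n * of (hm n) = of (hm n) := by
  have normal : n ᵥ* of (hm n) = 0 := by
    rw [of_hm_eq, vecMul_add, vecMul_vecMulVec, hn, ← mulVec_transpose, transpose_of_gm,
      ← lo_eq_mulVec]
    simp
  rw [spatialProj, add_mul, vecMulVec_mul, normal, one_mul]
  simp

theorem trace_spatialProj (hn : n ⬝ᵥ lo n = -1) : (spatialProj n).trace = 3 := by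
  rw [spatialProj, trace_add, trace_one, trace_vecMulVec, dotProduct_comm, hn]
  norm_num

theorem of_hm_mul_mul_of_hm_apply (U : Matrix (Fin 4) (Fin 4) ℝ) (a b : Fin 4) :
    (of (hm n) * U * of (hm n)) a b = ∑ e, ∑ f, hm n a e * hm n b f * U e f := by
  simpa only [transpose_of_hm, of_apply] using mul_mul_transpose_apply (of (hm n)) U a b

theorem of_hm_mul_raise_mul_of_hm (U : Matrix (Fin 4) (Fin 4) ℝ) :
    of (hm n) * (of gm * U * of gm) * of (hm n) = spatialProj n * U * (spatialProj n)ᵀ := by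
  rw [← of_hm_mul_of_gm, transpose_mul, transpose_of_hm, transpose_of_gm]
  simp only [mul_assoc]

theorem eps_dotProduct_mulVec_eps (hn : n ⬝ᵥ lo n = -1) (U : Matrix (Fin 4) (Fin 4) ℝ)
    (a b c d : Fin 4) :
    eps n a b ⬝ᵥ U *ᵥ eps n c d =
      (hm n a c * hm n b d - hm n a d * hm n b c) * (of (hm n) * U).trace
        - hm n a c * (of (hm n) * U * of (hm n)) d b
        + hm n a d * (of (hm n) * U * of (hm n)) c b
        + hm n b c * (of (hm n) * U * of (hm n)) d a
        - hm n b d * (of (hm n) * U * of (hm n)) c a := by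
  have trace_eq : (of (hm n) * U).trace = ∑ e, ∑ f, hm n e f * U e f := by
    simp only [trace, diag_apply, mul_apply, of_apply]
    rw [Finset.sum_comm]
    simp only [hm_comm]
  simp only [of_hm_mul_mul_of_hm_apply, trace_eq, Finset.mul_sum, ← Finset.sum_sub_distrib,
    ← Finset.sum_add_distrib, dotProduct, mulVec]
  refine Finset.sum_congr rfl fun e _ => Finset.sum_congr rfl fun f _ => ?_
  have gram := eps_mul_eps hn a b e c d f
  rw [det_fin_three] at gram
  simp only [submatrix_apply, of_apply, cons_val_zero, cons_val_one, cons_val] at gram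
  rw [hm_comm e c, hm_comm e d] at gram
  linear_combination U e f * gram

theorem eps_dotProduct_lo_eps (hn : n ⬝ᵥ lo n = -1) (a b c d : Fin 4) :
    eps n a b ⬝ᵥ lo (eps n c d) = hm n a c * hm n b d - hm n a d * hm n b c := by
  rw [lo_eq_mulVec, eps_dotProduct_mulVec_eps hn, of_hm_mul_of_gm, trace_spatialProj hn,
    spatialProj_mul_of_hm hn]
  simp only [of_apply, hm_comm d, hm_comm c]
  ring

theorem eps_dotProduct_raise_mulVec_eps (hn : n ⬝ᵥ lo n = -1) {X : Matrix (Fin 4) (Fin 4) ℝ}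
    (hXn : X *ᵥ n = 0) (hX : Xᵀ = X) (a b c d : Fin 4) :
    eps n a b ⬝ᵥ (of gm * X * of gm) *ᵥ eps n c d =
      (hm n a c * hm n b d - hm n a d * hm n b c) * (of gm * X).trace
        - hm n a c * X b d + hm n a d * X b c + hm n b c * X a d - hm n b d * X a c := by
  have X_comm (i j : Fin 4) : X j i = X i j := congr_fun₂ hX i j
  have hnX : n ᵥ* X = 0 := by rw [← mulVec_transpose, hX, hXn]
  have proj_mul : spatialProj n * X = X := by
    simp [spatialProj, add_mul, vecMulVec_mul, hnX]
  have spatial : of (hm n) * (of gm * X * of gm) * of (hm n) = X := by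
    rw [of_hm_mul_raise_mul_of_hm, proj_mul, ← hX, ← transpose_mul, proj_mul]
  have trace_eq : (of (hm n) * (of gm * X * of gm)).trace = (of gm * X).trace := by
    rw [← mul_assoc, ← mul_assoc, of_hm_mul_of_gm, proj_mul, trace_mul_comm]
  rw [eps_dotProduct_mulVec_eps hn, spatial, trace_eq, X_comm b d, X_comm b c,
    X_comm a d, X_comm a c]

/-- The Hodge dual `½ η_{abpq} F^{pq}` of a 2-tensor `F`, as a linear map. -/
def hodge : Matrix (Fin 4) (Fin 4) ℝ →ₗ[ℝ] Matrix (Fin 4) (Fin 4) ℝ where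
  toFun F := of fun a b =>
    (1 / 2) * ∑ p, ∑ q, eta a b p q * (∑ r, ∑ s, gm p r * gm q s * F r s)
  map_add' F G := by
    ext a b
    simp [mul_add, Finset.sum_add_distrib]
  map_smul' k F := by
    ext a b
    simp [Finset.mul_sum, mul_left_comm]

theorem hodge_apply (F : Matrix (Fin 4) (Fin 4) ℝ) (a b : Fin 4) :
    hodge F a b = (1 / 2) * ∑ p, ∑ q, eta a b p q * (of gm * F * of gm) p q := by
  simp only [of_gm_mul_mul_of_gm_apply]
  rfl

theorem transpose_hodge (F : Matrix (Fin 4) (Fin 4) ℝ) : (hodge F)ᵀ = -hodge F := by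
  ext a b
  simp [hodge_apply, eta_swap_left a b]

theorem hodge_mulVec (F : Matrix (Fin 4) (Fin 4) ℝ) (v : Fin 4 → ℝ) :
    hodge F *ᵥ v = -(1 / 2 : ℝ) • ∑ p, ∑ q, (of gm * F * of gm) p q • eps v p q := by
  ext c
  have eta_eq (b p q : Fin 4) : eta c b p q = -eta b p q c := by
    rw [eta_swap_left, ← eta_rotate_right]
  simp only [mulVec, dotProduct, hodge_apply, eta_eq, eps, Pi.smul_apply, Finset.sum_apply,
    smul_eq_mul, Finset.mul_sum, Finset.sum_mul]
  rw [Finset.sum_comm]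
  refine Finset.sum_congr rfl fun p _ => ?_
  rw [Finset.sum_comm]
  exact Finset.sum_congr rfl fun q _ => Finset.sum_congr rfl fun b _ => by ring

theorem spatialProj_mul_mul_transpose {F : Matrix (Fin 4) (Fin 4) ℝ} (hF : Fᵀ = -F) :
    spatialProj n * F * (spatialProj n)ᵀ =
      F - vecMulVec (lo n) (F *ᵥ n) + vecMulVec (F *ᵥ n) (lo n) := by
  have vecMul_eq : n ᵥ* F = -(F *ᵥ n) := by rw [← mulVec_transpose, hF, neg_mulVec]
  rw [spatialProj, transpose_add, transpose_one, transpose_vecMulVec, add_mul, one_mul,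
    vecMulVec_mul, vecMul_eq, mul_add, mul_one, mul_vecMulVec, add_mulVec, vecMulVec_mulVec,
    neg_dotProduct, dotProduct_comm, dotProduct_mulVec_self_eq_zero hF]
  simp [vecMulVec_neg, sub_eq_add_neg]

theorem eps_dotProduct_lo_hodge_mulVec (hn : n ⬝ᵥ lo n = -1) {F : Matrix (Fin 4) (Fin 4) ℝ}
    (hF : Fᵀ = -F) (a b : Fin 4) :
    eps n a b ⬝ᵥ lo (hodge F *ᵥ n) = -(spatialProj n * F * (spatialProj n)ᵀ) a b := by
  let V := of (hm n) * (of gm * F * of gm) * of (hm n)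
  have V_eq : V = spatialProj n * F * (spatialProj n)ᵀ := of_hm_mul_raise_mul_of_hm F
  have V_antisymm : V b a = -V a b := by
    have : Vᵀ = -V := by
      rw [V_eq, transpose_mul, transpose_mul, hF, transpose_transpose, neg_mul, mul_neg, mul_assoc]
    exact congr_fun₂ this a b
  calc eps n a b ⬝ᵥ lo (hodge F *ᵥ n)
      = -(1 / 2) * ∑ p, ∑ q, (of gm * F * of gm) p q * (eps n a b ⬝ᵥ lo (eps n p q)) := by
        simp only [hodge_mulVec, lo_eq_mulVec, mulVec_smul, mulVec_sum, dotProduct_smul,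
          dotProduct_sum, smul_eq_mul]
    _ = -(1 / 2) * (V a b - V b a) := by
        simp only [V, of_hm_mul_mul_of_hm_apply, ← Finset.sum_sub_distrib,
          eps_dotProduct_lo_eps hn]
        congr 1
        exact Finset.sum_congr rfl fun p _ => Finset.sum_congr rfl fun q _ => by ring
    _ = -(spatialProj n * F * (spatialProj n)ᵀ) a b := by
        rw [V_antisymm, ← V_eq]
        ring

theorem bivector_splitting (hn : n ⬝ᵥ lo n = -1) {F : Matrix (Fin 4) (Fin 4) ℝ}
    (hF : Fᵀ = -F) (a b : Fin 4) :
    F a b = lo n a * (F *ᵥ n) b - lo n b * (F *ᵥ n) a - eps n a b ⬝ᵥ lo (hodge F *ᵥ n) := by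
  rw [eps_dotProduct_lo_hodge_mulVec hn hF, spatialProj_mul_mul_transpose hF]
  simp only [Matrix.add_apply, Matrix.sub_apply, vecMulVec_apply]
  ring

/-- The contraction `T_{abcd} n^d`, as a 2-tensor in the indices `a, b` for each fixed `c`. -/
def contractLast (T : Tensor4) (n : Fin 4 → ℝ) (c : Fin 4) : Matrix (Fin 4) (Fin 4) ℝ :=
  of fun a b => T a b c ⬝ᵥ n

theorem contractLast_mulVec (T : Tensor4) (c : Fin 4) :
    contractLast T n c *ᵥ n = (Yt T n · c) := by
  ext a
  simp only [mulVec, dotProduct, contractLast, of_apply, Yt, Finset.sum_mul]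
  exact Finset.sum_congr rfl fun b _ => Finset.sum_congr rfl fun d _ => by ring

theorem hodge_contractLast (T : Tensor4) (c : Fin 4) :
    hodge (contractLast T n c) = contractLast (dualL T) n c := by
  have contractLast_eq (S : Tensor4) :
      contractLast S n c = ∑ d, n d • of fun a b => S a b c d := by
    ext a b
    simp [contractLast, dotProduct, Matrix.sum_apply, -smul_of, mul_comm]
  rw [contractLast_eq, contractLast_eq, map_sum]
  simp only [map_smul]
  rfl

theorem transpose_contractLast {T : Tensor4} (h₁ : ∀ a b c d, T a b c d = -T b a c d)
    (c : Fin 4) : (contractLast T n c)ᵀ = -contractLast T n c := by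
  ext a b
  simp [contractLast, dotProduct, h₁ b a]

theorem contractLast_splitting (hn : n ⬝ᵥ lo n = -1) {T : Tensor4}
    (h₁ : ∀ a b c d, T a b c d = -T b a c d) (a b c : Fin 4) :
    contractLast T n c a b =
      lo n a * Yt T n b c - lo n b * Yt T n a c - eps n a b ⬝ᵥ lo (Zt T n · c) := by
  rw [bivector_splitting hn (transpose_contractLast h₁ c), hodge_contractLast,
    contractLast_mulVec, contractLast_mulVec]
  rfl

theorem dualR_eq_hodge (T : Tensor4) (a b c d : Fin 4) :
    dualR T a b c d = hodge (of (T a b)) c d := by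
  simp only [dualR, eta_swap_pairs c d]
  rfl

theorem dualR_eq_dualL_swap (T : Tensor4) :
    dualR T = fun a b c d => dualL (fun a b c d => T c d a b) c d a b := by
  ext a b c d
  exact dualR_eq_hodge T a b c d

theorem dualR_dualL (T : Tensor4) : dualR (dualL T) = dualL (dualR T) := by
  ext a b c d
  have dualL_eq_sum : of (dualL T a b) =
      (1 / 2 : ℝ) • ∑ p, ∑ q, eta a b p q • ∑ r, ∑ s, (gm p r * gm q s) • of (T r s) := by
    ext
    simp [dualL, Matrix.sum_apply, -smul_of]
  rw [dualR_eq_hodge, dualL_eq_sum]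
  simp [dualL, dualR_eq_hodge, Matrix.sum_apply, -smul_of]

theorem dualL_antisymm_left (T : Tensor4) (a b c d : Fin 4) : dualL T a b c d = -dualL T b a c d :=
  congr_fun₂ (transpose_hodge (of fun p q => T p q c d)) b a

theorem dualR_antisymm_left {T : Tensor4} (h₁ : ∀ a b c d, T a b c d = -T b a c d)
    (a b c d : Fin 4) : dualR T a b c d = -dualR T b a c d := by
  simp [dualR, h₁ a b]

theorem Yt_swap (T : Tensor4) (a c : Fin 4) :
    Yt (fun a b c d => T c d a b) n a c = Yt T n c a := by
  simp only [Yt]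
  rw [Finset.sum_comm]
  simp only [mul_right_comm]

theorem dualLR_pairSymm {R : Tensor4} (hp : ∀ a b c d, R a b c d = R c d a b) :
    dualLR R = fun a b c d => dualLR R c d a b := by
  have dualR_eq : dualR R = fun a b c d => dualL R c d a b := by
    simp only [dualR_eq_dualL_swap, ← hp]
  calc dualLR R = dualR (dualL R) := (dualR_dualL R).symm
    _ = fun a b c d => dualLR R c d a b := by rw [dualR_eq_dualL_swap, ← dualR_eq, dualLR]

theorem Yt_dualR {R : Tensor4} (hp : ∀ a b c d, R a b c d = R c d a b) (a c : Fin 4) :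
    Yt (dualR R) n a c = Zt R n c a := by
  simp only [dualR_eq_dualL_swap, ← hp, Yt_swap]
  rfl

theorem Xt_comm {R : Tensor4} (hp : ∀ a b c d, R a b c d = R c d a b) (a c : Fin 4) :
    Xt R n a c = Xt R n c a :=
  (congr_arg (Yt · n a c) (dualLR_pairSymm hp)).trans (Yt_swap (dualLR R) a c)

theorem transpose_of_Xt {R : Tensor4} (hp : ∀ a b c d, R a b c d = R c d a b) :
    (of (Xt R n))ᵀ = of (Xt R n) := by
  ext a c
  exact Xt_comm hp c a

theorem of_Xt_mulVec {R : Tensor4} (hp : ∀ a b c d, R a b c d = R c d a b) :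
    of (Xt R n) *ᵥ n = 0 := by
  ext c
  rw [← transpose_of_Xt hp, mulVec_transpose]
  have antisymm := transpose_contractLast (n := n) (dualL_antisymm_left (dualR R)) c
  have := dotProduct_mulVec_self_eq_zero antisymm n
  rwa [contractLast_mulVec] at this

theorem double_bivector_splitting (hn : n ⬝ᵥ lo n = -1) {T : Tensor4}
    (h₁ : ∀ a b c d, T a b c d = -T b a c d) (h₂ : ∀ a b c d, T a b c d = -T a b d c)
    (a b c d : Fin 4) :
    T a b c d =
      lo n c * (lo n a * Yt T n b d - lo n b * Yt T n a d - eps n a b ⬝ᵥ lo (Zt T n · d))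
        - lo n d * (lo n a * Yt T n b c - lo n b * Yt T n a c - eps n a b ⬝ᵥ lo (Zt T n · c))
        - lo n a * (eps n c d ⬝ᵥ lo (Yt (dualR T) n b))
        + lo n b * (eps n c d ⬝ᵥ lo (Yt (dualR T) n a))
        + eps n c d ⬝ᵥ (of gm * (of (Xt T n))ᵀ * of gm) *ᵥ eps n a b := by
  have antisymm : (of (T a b))ᵀ = -of (T a b) := by
    ext p q
    exact h₂ a b q p
  have mulVec_eq (S : Tensor4) (c : Fin 4) : (of (S a b) *ᵥ n) c = contractLast S n c a b := rfl
  have hodge_eq : hodge (of (T a b)) = of (dualR T a b) := by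
    ext p q
    exact (dualR_eq_hodge T a b p q).symm
  have dual_eq : of (dualR T a b) *ᵥ n =
      lo n a • Yt (dualR T) n b - lo n b • Yt (dualR T) n a
        - (of (Xt T n))ᵀ *ᵥ lo (eps n a b) := by
    ext e
    rw [mulVec_eq, contractLast_splitting hn (dualR_antisymm_left h₁), ← lo_dotProduct_comm,
      dotProduct_comm]
    rfl
  have := bivector_splitting hn antisymm c d
  rw [hodge_eq, dual_eq, mulVec_eq, mulVec_eq, contractLast_splitting hn h₁,
    contractLast_splitting hn h₁] at this
  simp only [lo_eq_mulVec, mulVec_sub, mulVec_smul, dotProduct_sub, dotProduct_smul, smul_eq_mul,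
    mulVec_mulVec, mul_assoc, of_apply] at this ⊢
  rw [this]
  ring

end UnitNormal

theorem riemann_orthogonal_splitting_general
    (R : Tensor4) (h₁ : ∀ a b c d, R a b c d = -R b a c d)
    (hp : ∀ a b c d, R a b c d = R c d a b)
    (n : Fin 4 → ℝ) (hn : (∑ a, ∑ b, gm a b * n a * n b) = -1) :
    ∀ a b c d : Fin 4,
      R a b c d =
        lo n c * (lo n a * Yt R n b d - lo n b * Yt R n a d)
        + (hm n a d * Xt R n c b - hm n a c * Xt R n d b)
        + lo n d * (lo n b * Yt R n a c - lo n a * Yt R n b c)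
        + (∑ e, ∑ f, (lo n d * gm e f * Zt R n f c - lo n c * gm e f * Zt R n f d)
            * eps n a b e)
        + (∑ e, ∑ f, (lo n b * gm e f * Zt R n f a - lo n a * gm e f * Zt R n f b)
            * eps n c d e)
        + hm n b d * (hm n a c * (∑ e, ∑ f, gm e f * Xt R n e f) - Xt R n a c)
        + hm n b c * (Xt R n a d - hm n a d * (∑ e, ∑ f, gm e f * Xt R n e f)) := by
  intro a b c d
  have h₂ (a b c d : Fin 4) : R a b c d = -R a b d c := by rw [hp, h₁, hp d c]
  have unit : n ⬝ᵥ lo n = -1 := (dotProduct_lo n n).trans hn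
  have symm := transpose_of_Xt (n := n) hp
  have trace_eq : ∑ e, ∑ f, gm e f * Xt R n e f = (of gm * of (Xt R n)).trace := by
    rw [← symm]
    rfl
  have dual_eq (a : Fin 4) : Yt (dualR R) n a = (Zt R n · a) := funext (Yt_dualR hp a)
  rw [double_bivector_splitting unit h₁ h₂, symm,
    eps_dotProduct_raise_mulVec_eps unit (of_Xt_mulVec hp) symm, sum_raise_mul,
    sum_raise_mul, dual_eq, dual_eq, trace_eq]
  simp only [of_apply, hm_comm c, hm_comm d, Xt_comm hp c a, Xt_comm hp d a]
  ring

/-- Orthogonal splitting of the Riemann tensor with respect to a unit timelike `n^a`. -/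
theorem riemann_orthogonal_splitting
    (R : Tensor4) (hR : RiemannSymm R)
    (n : Fin 4 → ℝ) (hn : (∑ a, ∑ b, gm a b * n a * n b) = -1) :
    ∀ a b c d : Fin 4,
      R a b c d =
        lo n c * (lo n a * Yt R n b d - lo n b * Yt R n a d)
        + (hm n a d * Xt R n c b - hm n a c * Xt R n d b)
        + lo n d * (lo n b * Yt R n a c - lo n a * Yt R n b c)
        + (∑ e, ∑ f, (lo n d * gm e f * Zt R n f c - lo n c * gm e f * Zt R n f d)
            * eps n a b e)
        + (∑ e, ∑ f, (lo n b * gm e f * Zt R n f a - lo n a * gm e f * Zt R n f b)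
            * eps n c d e)
        + hm n b d * (hm n a c * (∑ e, ∑ f, gm e f * Xt R n e f) - Xt R n a c)
        + hm n b c * (Xt R n a d - hm n a d * (∑ e, ∑ f, gm e f * Xt R n e f)) := by
  exact riemann_orthogonal_splitting_general R hR.antisymm₁ hR.pairSymm n hn
end
end

section
/- Let R_{abcd} have Riemann symmetries on Minkowski space and let B_{abcd} be its Bel tensor. Then B_{abcd} satisfies the generalized dominant property: if u₁^a, u₂^a, u₃^a, u₄^a are arbitrary causal future-directed vectors then B_{abcd} u₁^a u₂^b u₃^c u₄^d ≥ 0. -/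
noncomputable section

/-- Double contraction `A_{apcq} B_b{}^p{}_d{}^q` (indices raised with `gm`). -/
def q2 (A B : Tensor4) (a b c d : Fin 4) : ℝ :=
  ∑ p, ∑ q, ∑ r, ∑ s, A a p c q * gm p r * gm q s * B b r d s

/-- Triple contraction `A_{aefp} B_b{}^{efp}`. -/
def q3 (A B : Tensor4) (a b : Fin 4) : ℝ :=
  ∑ e, ∑ f, ∑ p, ∑ r, ∑ s, ∑ t, A a e f p * gm e r * gm f s * gm p t * B b r s t

/-- Full contraction `A_{efph} B^{efph}`. -/
def q4 (A B : Tensor4) : ℝ :=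
  ∑ e, ∑ f, ∑ p, ∑ h, ∑ r, ∑ s, ∑ t, ∑ u,
    A e f p h * gm e r * gm f s * gm p t * gm h u * B r s t u

/-- The Bel tensor of `R`:
`B_{abcd} = R_{aecf} R_b{}^e{}_d{}^f − ½ g_{cd} R_{aefp} R_b{}^{efp} − ½ g_{ab} R_{cefp} R_d{}^{efp}`
`+ R_b{}^e{}_c{}^f R_{dfae} + ⅛ g_{ab} g_{cd} R_{efph} R^{efph}`. -/
def Bel (R : Tensor4) (a b c d : Fin 4) : ℝ :=
  q2 R R a b c d
  - (1/2) * gm c d * q3 R R a b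
  - (1/2) * gm a b * q3 R R c d
  + (∑ e, ∑ f, ∑ r, ∑ s, gm e r * gm f s * R b r c s * R d f a e)
  + (1/8) * gm a b * gm c d * q4 R R

/-!
For a 2-form `F`, let `T(F)` be its electromagnetic stress-energy tensor. Rainich's identity
`T g⁻¹ T = ρ g` with `ρ ≥ 0` makes `T(F)` map the future cone into itself, and the cone is
self-dual, so `T(F)(u, v) ≥ 0` for future causal `u` and `v`. Thus `K_{uv} : F ↦ T(F)(u, v)` is a
positive semidefinite quadratic form on 2-forms. Reading the curvature as an operator `𝓡` on
2-forms, the contraction of the Bel tensor with `u₁, u₂, u₃, u₄` is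
`2 tr(𝓡ᵀ K_{u₁u₂} 𝓡 K_{u₃u₄})`, the trace of a product of two positive semidefinite operators.
-/

open Matrix
open scoped Kronecker

section LorentzCone

variable {n : ℕ}

/-- The Minkowski metric `diag(-1, 1, …, 1)` of `ℝ^{1+n}` as a matrix. -/
def minkowski (n : ℕ) : Matrix (Fin (n + 1)) (Fin (n + 1)) ℝ := diagonal (Fin.cons (-1) 1)

/-- The closed cone of future-directed causal vectors of `ℝ^{1+n}`, with its apex `0`. -/
def futureCone (n : ℕ) : Set (Fin (n + 1) → ℝ) := {u | 0 ≤ u 0 ∧ u ⬝ᵥ minkowski n *ᵥ u ≤ 0}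

lemma minkowski_transpose : (minkowski n)ᵀ = minkowski n := diagonal_transpose _

lemma dotProduct_minkowski_mulVec (u v : Fin (n + 1) → ℝ) :
    u ⬝ᵥ minkowski n *ᵥ v = -(u 0 * v 0) + ∑ i : Fin n, u i.succ * v i.succ := by
  simp [minkowski, dotProduct, Fin.sum_univ_succ, mulVec_diagonal]

lemma sum_sq_le_of_mem_futureCone {u : Fin (n + 1) → ℝ} (hu : u ∈ futureCone n) :
    ∑ i : Fin n, u i.succ ^ 2 ≤ u 0 ^ 2 := by
  have h := hu.2
  simp only [dotProduct_minkowski_mulVec, ← sq] at h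
  linarith

-- The cone is self-dual for the Euclidean pairing, so no index needs to be raised.
lemma dotProduct_nonneg_of_mem_futureCone {u v : Fin (n + 1) → ℝ}
    (hu : u ∈ futureCone n) (hv : v ∈ futureCone n) : 0 ≤ u ⬝ᵥ v := by
  have cauchy_schwarz : (∑ i : Fin n, u i.succ * v i.succ) ^ 2 ≤ (u 0 * v 0) ^ 2 :=
    calc (∑ i : Fin n, u i.succ * v i.succ) ^ 2
        ≤ (∑ i : Fin n, u i.succ ^ 2) * ∑ i : Fin n, v i.succ ^ 2 :=
          Finset.sum_mul_sq_le_sq_mul_sq _ _ _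
      _ ≤ u 0 ^ 2 * v 0 ^ 2 := by
          gcongr
          exacts [sum_sq_le_of_mem_futureCone hu, sum_sq_le_of_mem_futureCone hv]
      _ = (u 0 * v 0) ^ 2 := (mul_pow _ _ _).symm
  have lower_bound := (abs_le_of_sq_le_sq' cauchy_schwarz (mul_nonneg hu.1 hv.1)).1
  rw [dotProduct, Fin.sum_univ_succ]
  linarith

lemma single_zero_mem_futureCone : (Pi.single 0 1 : Fin (n + 1) → ℝ) ∈ futureCone n := by
  simp [futureCone, dotProduct_minkowski_mulVec]

section Conformal

variable {T : Matrix (Fin (n + 1)) (Fin (n + 1)) ℝ} {ρ : ℝ}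

lemma mulVec_dotProduct_minkowski_mulVec_self (hT : Tᵀ = T)
    (hTT : T * minkowski n * T = ρ • minkowski n) (u : Fin (n + 1) → ℝ) :
    (T *ᵥ u) ⬝ᵥ minkowski n *ᵥ (T *ᵥ u) = ρ * (u ⬝ᵥ minkowski n *ᵥ u) :=
  calc (T *ᵥ u) ⬝ᵥ minkowski n *ᵥ (T *ᵥ u)
      = u ⬝ᵥ (T * minkowski n * T) *ᵥ u := by
        nth_rw 1 [← hT]
        rw [mulVec_transpose, ← dotProduct_mulVec, mulVec_mulVec, mulVec_mulVec, Matrix.mul_assoc]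
    _ = ρ * (u ⬝ᵥ minkowski n *ᵥ u) := by rw [hTT, smul_mulVec, dotProduct_smul, smul_eq_mul]

lemma mulVec_mem_futureCone (hT : Tᵀ = T) (hρ : 0 ≤ ρ)
    (hTT : T * minkowski n * T = ρ • minkowski n) (hT₀ : 0 ≤ T 0 0)
    {u : Fin (n + 1) → ℝ} (hu : u ∈ futureCone n) : T *ᵥ u ∈ futureCone n := by
  have causal : ∀ {v : Fin (n + 1) → ℝ}, v ∈ futureCone n →
      (T *ᵥ v) ⬝ᵥ minkowski n *ᵥ (T *ᵥ v) ≤ 0 := fun hv => by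
    rw [mulVec_dotProduct_minkowski_mulVec_self hT hTT]
    exact mul_nonpos_of_nonneg_of_nonpos hρ hv.2
  have column_mem : T *ᵥ Pi.single 0 1 ∈ futureCone n :=
    ⟨by simpa using hT₀, causal single_zero_mem_futureCone⟩
  refine ⟨?_, causal hu⟩
  calc 0 ≤ (T *ᵥ Pi.single 0 1) ⬝ᵥ u := dotProduct_nonneg_of_mem_futureCone column_mem hu
    _ = Pi.single 0 1 ⬝ᵥ T *ᵥ u := by
        nth_rw 1 [← hT]
        rw [mulVec_transpose, ← dotProduct_mulVec]
    _ = (T *ᵥ u) 0 := single_one_dotProduct _ _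

end Conformal

end LorentzCone

section StressEnergy

variable {n : ℕ}

/-- The electromagnetic stress-energy tensor `F_{ca} F^c{}_b - ¼ g_{ab} F_{cd} F^{cd}` of a
2-form `F`. -/
def stressEnergy (F : Matrix (Fin (n + 1)) (Fin (n + 1)) ℝ) :
    Matrix (Fin (n + 1)) (Fin (n + 1)) ℝ :=
  Fᵀ * minkowski n * F - (1 / 4 * trace (Fᵀ * minkowski n * F * minkowski n)) • minkowski n

lemma stressEnergy_transpose (F : Matrix (Fin (n + 1)) (Fin (n + 1)) ℝ) :
    (stressEnergy F)ᵀ = stressEnergy F := by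
  simp only [stressEnergy, transpose_sub, transpose_mul, transpose_smul, transpose_transpose,
    minkowski_transpose, Matrix.mul_assoc]

/-- The 2-form with electric part `E` and magnetic part `B`: `F_{0i} = E_i` and
`F_{ij} = ε_{ijk} B_k`. -/
def faraday (E B : Fin 3 → ℝ) : Matrix (Fin 4) (Fin 4) ℝ :=
  !![0, E 0, E 1, E 2;
    -E 0, 0, B 2, -B 1;
    -E 1, -B 2, 0, B 0;
    -E 2, B 1, -B 0, 0]

lemma exists_eq_faraday_of_transpose_eq_neg {F : Matrix (Fin 4) (Fin 4) ℝ} (hF : Fᵀ = -F) :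
    ∃ E B, F = faraday E B := by
  have antisymm (i j) : F j i = -F i j := congr_fun₂ hF i j
  have diag_zero (i) : F i i = 0 := by linarith [antisymm i i]
  refine ⟨![F 0 1, F 0 2, F 0 3], ![F 2 3, F 3 1, F 1 2], ?_⟩
  ext i j
  fin_cases i <;> fin_cases j <;> first | exact diag_zero _ | rfl | exact antisymm _ _

lemma det_faraday (E B : Fin 3 → ℝ) : (faraday E B).det = (E ⬝ᵥ B) ^ 2 := by
  simp [faraday, det_succ_row_zero, Fin.sum_univ_succ, Fin.succAbove, dotProduct]
  ring

lemma minkowski_three :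
    minkowski 3 = !![-1, 0, 0, 0; 0, 1, 0, 0; 0, 0, 1, 0; 0, 0, 0, 1] := by
  ext i j
  fin_cases i <;> fin_cases j <;> rfl

lemma trace_faraday_transpose_mul_self (E B : Fin 3 → ℝ) :
    trace ((faraday E B)ᵀ * minkowski 3 * faraday E B * minkowski 3) =
      2 * (B ⬝ᵥ B - E ⬝ᵥ E) := by
  simp [faraday, minkowski_three, Fin.sum_univ_succ, trace, dotProduct, mul_apply]
  ring

lemma stressEnergy_faraday (E B : Fin 3 → ℝ) :
    let t := (E ⬝ᵥ E + B ⬝ᵥ B) / 2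
    let s := E ⨯₃ B
    stressEnergy (faraday E B) =
      !![t, s 0, s 1, s 2;
        s 0, t - E 0 ^ 2 - B 0 ^ 2, -(E 0 * E 1 + B 0 * B 1), -(E 0 * E 2 + B 0 * B 2);
        s 1, -(E 0 * E 1 + B 0 * B 1), t - E 1 ^ 2 - B 1 ^ 2, -(E 1 * E 2 + B 1 * B 2);
        s 2, -(E 0 * E 2 + B 0 * B 2), -(E 1 * E 2 + B 1 * B 2), t - E 2 ^ 2 - B 2 ^ 2] := by
  intro t s
  rw [stressEnergy, trace_faraday_transpose_mul_self, faraday, minkowski_three]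
  ext i j
  fin_cases i <;> fin_cases j <;>
    simp [t, s, Fin.sum_univ_succ, dotProduct, mul_apply, cross_apply] <;> ring

-- Rainich's identity; it is the Cayley–Hamilton theorem for `g⁻¹ F`, whose characteristic
-- polynomial is even.
lemma stressEnergy_mul_minkowski_mul_self {F : Matrix (Fin 4) (Fin 4) ℝ} (hF : Fᵀ = -F) :
    stressEnergy F * minkowski 3 * stressEnergy F =
      ((1 / 4 * trace (Fᵀ * minkowski 3 * F * minkowski 3)) ^ 2 + F.det) • minkowski 3 := by
  obtain ⟨E, B, rfl⟩ := exists_eq_faraday_of_transpose_eq_neg hF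
  rw [trace_faraday_transpose_mul_self, det_faraday, stressEnergy_faraday, minkowski_three]
  ext i j
  fin_cases i <;> fin_cases j <;>
    simp [Fin.sum_univ_succ, dotProduct, cross_apply] <;> ring

lemma det_nonneg_of_transpose_eq_neg {F : Matrix (Fin 4) (Fin 4) ℝ} (hF : Fᵀ = -F) :
    0 ≤ F.det := by
  obtain ⟨E, B, rfl⟩ := exists_eq_faraday_of_transpose_eq_neg hF
  exact det_faraday E B ▸ sq_nonneg _

lemma stressEnergy_zero_zero_nonneg {F : Matrix (Fin 4) (Fin 4) ℝ} (hF : Fᵀ = -F) :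
    0 ≤ stressEnergy F 0 0 := by
  obtain ⟨E, B, rfl⟩ := exists_eq_faraday_of_transpose_eq_neg hF
  rw [stressEnergy_faraday]
  have dotProduct_self_nonneg (x : Fin 3 → ℝ) : 0 ≤ x ⬝ᵥ x := dotProduct_star_self_nonneg x
  exact div_nonneg (add_nonneg (dotProduct_self_nonneg E) (dotProduct_self_nonneg B)) two_pos.le

theorem stressEnergy_dominant_energy {F : Matrix (Fin 4) (Fin 4) ℝ} (hF : Fᵀ = -F)
    {u v : Fin 4 → ℝ} (hu : u ∈ futureCone 3) (hv : v ∈ futureCone 3) :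
    0 ≤ u ⬝ᵥ stressEnergy F *ᵥ v :=
  dotProduct_nonneg_of_mem_futureCone hu <|
    mulVec_mem_futureCone (stressEnergy_transpose F)
      (add_nonneg (sq_nonneg _) (det_nonneg_of_transpose_eq_neg hF))
      (stressEnergy_mul_minkowski_mul_self hF) (stressEnergy_zero_zero_nonneg hF) hv

end StressEnergy

section EnergyForm

variable {n : ℕ}

/-- The symmetric tensor `S^{ab} = u^{(a} v^{b)} - ¼ g(u, v) g^{ab}`. -/
def energyWeight (u v : Fin (n + 1) → ℝ) : Matrix (Fin (n + 1)) (Fin (n + 1)) ℝ :=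
  (1 / 2 : ℝ) • (vecMulVec u v + vecMulVec v u) -
    (1 / 4 * (u ⬝ᵥ minkowski n *ᵥ v)) • minkowski n

lemma energyWeight_transpose (u v : Fin (n + 1) → ℝ) :
    (energyWeight u v)ᵀ = energyWeight u v := by
  simp only [energyWeight, transpose_sub, transpose_smul, transpose_add, transpose_vecMulVec,
    minkowski_transpose, add_comm (vecMulVec v u)]

/-- The matrix of the quadratic form `F ↦ T(F)(u, v)`, where `T(F)` is the stress-energy tensor,
on the space `ℝ^{(1+n)²}` of all tensors with two indices; `F` is flattened by `Matrix.vec`. -/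
def energyForm (u v : Fin (n + 1) → ℝ) :
    Matrix (Fin (n + 1) × Fin (n + 1)) (Fin (n + 1) × Fin (n + 1)) ℝ :=
  energyWeight u v ⊗ₖ minkowski n

lemma energyForm_transpose (u v : Fin (n + 1) → ℝ) : (energyForm u v)ᵀ = energyForm u v := by
  rw [energyForm, ← kroneckerMap_transpose, energyWeight_transpose, minkowski_transpose]

lemma vec_dotProduct_energyForm_mulVec_vec (u v : Fin (n + 1) → ℝ)
    (F : Matrix (Fin (n + 1)) (Fin (n + 1)) ℝ) :
    vec F ⬝ᵥ energyForm u v *ᵥ vec F = u ⬝ᵥ stressEnergy F *ᵥ v := by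
  have symm : v ⬝ᵥ (Fᵀ * minkowski n * F) *ᵥ u = u ⬝ᵥ (Fᵀ * minkowski n * F) *ᵥ v := by
    rw [dotProduct_mulVec, ← mulVec_transpose, dotProduct_comm]
    simp only [transpose_mul, transpose_transpose, minkowski_transpose, Matrix.mul_assoc]
  calc vec F ⬝ᵥ energyForm u v *ᵥ vec F
      = trace (Fᵀ * minkowski n * F * energyWeight u v) := by
        rw [energyForm, kronecker_mulVec_vec, vec_dotProduct_vec, energyWeight_transpose]
        simp only [Matrix.mul_assoc]
    _ = u ⬝ᵥ stressEnergy F *ᵥ v := by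
        simp only [energyWeight, stressEnergy, mul_sub, mul_add, mul_smul_comm, trace_sub,
          trace_smul, trace_add, mul_vecMulVec, trace_vecMulVec, sub_mulVec, smul_mulVec,
          dotProduct_sub, dotProduct_smul, smul_eq_mul, dotProduct_comm _ v, dotProduct_comm _ u,
          symm]
        ring

lemma dotProduct_energyForm_mulVec_nonneg {u v : Fin 4 → ℝ} (hu : u ∈ futureCone 3)
    (hv : v ∈ futureCone 3) {x : Fin 4 × Fin 4 → ℝ} (hx : x ∘ Prod.swap = -x) :
    0 ≤ x ⬝ᵥ energyForm u v *ᵥ x := by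
  obtain ⟨F, rfl⟩ := vec_bijective.surjective x
  have hF : Fᵀ = -F := vec_inj.mp hx
  rw [vec_dotProduct_energyForm_mulVec_vec]
  exact stressEnergy_dominant_energy hF hu hv

lemma posSemidef_transpose_mul_energyForm_mul {κ : Type*} [Finite κ]
    {M : Matrix (Fin 4 × Fin 4) κ ℝ} (hM : M.submatrix Prod.swap id = -M)
    {u v : Fin 4 → ℝ} (hu : u ∈ futureCone 3) (hv : v ∈ futureCone 3) :
    (Mᵀ * energyForm u v * M).PosSemidef := by
  have := Fintype.ofFinite κ
  refine .of_dotProduct_mulVec_nonneg ?_ fun x => ?_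
  · simp only [IsHermitian, conjTranspose_eq_transpose_of_trivial, transpose_mul,
      transpose_transpose, energyForm_transpose, Matrix.mul_assoc]
  · have antisymm : (M *ᵥ x) ∘ Prod.swap = -(M *ᵥ x) := by
      rw [← neg_mulVec, ← hM]
      rfl
    calc 0 ≤ (M *ᵥ x) ⬝ᵥ energyForm u v *ᵥ (M *ᵥ x) :=
          dotProduct_energyForm_mulVec_nonneg hu hv antisymm
      _ = star x ⬝ᵥ (Mᵀ * energyForm u v * M) *ᵥ x := by
          rw [star_trivial, ← mulVec_mulVec, ← mulVec_mulVec, dotProduct_mulVec x Mᵀ,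
            vecMul_transpose]

end EnergyForm

section Antisymmetrizer

variable {ι κ : Type*} [DecidableEq ι]

/-- The orthogonal projection of `ℝ^{ι × ι}` onto its antisymmetric elements, as a matrix. -/
def antisymmetrizer (ι : Type*) [DecidableEq ι] : Matrix (ι × ι) (ι × ι) ℝ :=
  (1 / 2 : ℝ) • (1 - Equiv.Perm.permMatrix ℝ (Equiv.prodComm ι ι))

lemma antisymmetrizer_transpose : (antisymmetrizer ι)ᵀ = antisymmetrizer ι := by
  rw [antisymmetrizer, transpose_smul, transpose_sub, transpose_one, transpose_permMatrix]
  rfl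

lemma antisymmetrizer_submatrix_swap :
    (antisymmetrizer ι).submatrix Prod.swap id = -antisymmetrizer ι := by
  ext ⟨i, j⟩ ⟨k, l⟩
  simp only [antisymmetrizer, one_apply, Equiv.Perm.permMatrix, PEquiv.toMatrix_apply,
    submatrix_apply, Matrix.smul_apply, Matrix.sub_apply, Matrix.neg_apply, smul_eq_mul, id,
    Prod.swap_prod_mk, Equiv.toPEquiv_apply, Equiv.prodComm_apply, Option.mem_some_iff,
    Prod.mk.injEq]
  ring

variable [Fintype ι]

lemma antisymmetrizer_mul (M : Matrix (ι × ι) κ ℝ) :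
    antisymmetrizer ι * M = (1 / 2 : ℝ) • (M - M.submatrix Prod.swap id) := by
  rw [antisymmetrizer, smul_mul, Matrix.sub_mul, Matrix.one_mul, Equiv.Perm.permMatrix,
    PEquiv.toMatrix_toPEquiv_mul]
  rfl

lemma antisymmetrizer_mul_eq_self {M : Matrix (ι × ι) κ ℝ}
    (hM : M.submatrix Prod.swap id = -M) : antisymmetrizer ι * M = M := by
  rw [antisymmetrizer_mul, hM, sub_neg_eq_add, ← two_smul ℝ, smul_smul]
  norm_num

end Antisymmetrizer

section Trace

open scoped ComplexOrder in
lemma trace_mul_nonneg_of_posSemidef {𝕜 ι : Type*} [RCLike 𝕜] [Fintype ι] {A B : Matrix ι ι 𝕜}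
    (hA : A.PosSemidef) (hB : B.PosSemidef) : 0 ≤ trace (A * B) := by
  obtain ⟨m, v, rfl⟩ := posSemidef_iff_eq_sum_vecMulVec.mp hB
  simp only [Finset.mul_sum, trace_sum, mul_vecMulVec, trace_vecMulVec]
  refine Finset.sum_nonneg fun i _ => ?_
  rw [dotProduct_comm]
  exact hA.dotProduct_mulVec_nonneg (v i)

theorem trace_mul_energyForm_mul_energyForm_nonneg
    {M : Matrix (Fin 4 × Fin 4) (Fin 4 × Fin 4) ℝ}
    (hM : M.submatrix Prod.swap id = -M) (hMt : Mᵀ.submatrix Prod.swap id = -Mᵀ)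
    {u₁ u₂ u₃ u₄ : Fin 4 → ℝ} (h₁ : u₁ ∈ futureCone 3) (h₂ : u₂ ∈ futureCone 3)
    (h₃ : u₃ ∈ futureCone 3) (h₄ : u₄ ∈ futureCone 3) :
    0 ≤ trace (Mᵀ * energyForm u₁ u₂ * M * energyForm u₃ u₄) := by
  set P := antisymmetrizer (Fin 4)
  have mul_proj : M * P = M := by
    rw [← transpose_inj, transpose_mul, antisymmetrizer_transpose, antisymmetrizer_mul_eq_self hMt]
  calc 0 ≤ trace (Mᵀ * energyForm u₁ u₂ * M * (Pᵀ * energyForm u₃ u₄ * P)) :=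
        trace_mul_nonneg_of_posSemidef (posSemidef_transpose_mul_energyForm_mul hM h₁ h₂)
          (posSemidef_transpose_mul_energyForm_mul antisymmetrizer_submatrix_swap h₃ h₄)
    _ = trace ((P * Mᵀ) * energyForm u₁ u₂ * (M * P) * energyForm u₃ u₄) := by
        rw [antisymmetrizer_transpose, ← Matrix.mul_assoc, trace_mul_comm]
        simp only [P, Matrix.mul_assoc]
    _ = trace (Mᵀ * energyForm u₁ u₂ * M * energyForm u₃ u₄) := by
        rw [mul_proj, antisymmetrizer_mul_eq_self hMt]

lemma trace_transpose_mul_mul_mul_transpose {α l m : Type*} [CommSemiring α] [Fintype l]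
    [Fintype m] (M : Matrix l m α) (K : Matrix l l α) (L : Matrix m m α) :
    trace (Mᵀ * K * M * Lᵀ) =
      ∑ x, ∑ y, ∑ z, ∑ w, M x z * M y w * K x y * L z w := by
  calc trace (Mᵀ * K * M * Lᵀ) = trace (K * (M * Lᵀ * Mᵀ)) := by
        rw [Matrix.mul_assoc, Matrix.mul_assoc, trace_mul_comm, Matrix.mul_assoc]
    _ = ∑ x, ∑ y, ∑ z, ∑ w, M x z * M y w * K x y * L z w := by
        simp only [trace, diag_apply, mul_apply, transpose_apply, Finset.mul_sum, Finset.sum_mul]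
        refine Finset.sum_congr rfl fun x _ => Finset.sum_congr rfl fun y _ =>
          Finset.sum_congr rfl fun z _ => Finset.sum_congr rfl fun w _ => ?_
        ring

end Trace

section BelTensor

lemma gm_eq_minkowski (a b : Fin 4) : gm a b = minkowski 3 a b := by
  fin_cases a <;> fin_cases b <;> rfl

/-- The curvature tensor `R_{apcq}` as a matrix with row index `(a, p)` and column index
`(c, q)`. -/
def curvatureMatrix (R : Tensor4) : Matrix (Fin 4 × Fin 4) (Fin 4 × Fin 4) ℝ :=
  of fun x y => R x.1 x.2 y.1 y.2

/-- The bilinear form `(A, B) ↦ R_{apcq} R_b{}^p{}_d{}^q A^{ab} B^{cd}`. -/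
def curvatureForm (R : Tensor4) :
    Matrix (Fin 4) (Fin 4) ℝ →ₗ[ℝ] Matrix (Fin 4) (Fin 4) ℝ →ₗ[ℝ] ℝ :=
  LinearMap.mk₂ ℝ (fun A B => ∑ a, ∑ b, ∑ c, ∑ d, q2 R R a b c d * A a b * B c d)
    (fun A A' B => by simp only [Matrix.add_apply, mul_add, add_mul, Finset.sum_add_distrib])
    (fun r A B => by
      simp only [Matrix.smul_apply, smul_eq_mul, Finset.mul_sum, mul_left_comm, mul_assoc])
    (fun A B B' => by simp only [Matrix.add_apply, mul_add, Finset.sum_add_distrib])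
    (fun r A B => by
      simp only [Matrix.smul_apply, smul_eq_mul, Finset.mul_sum, mul_left_comm, mul_assoc])

lemma curvatureForm_apply (R : Tensor4) (A B : Matrix (Fin 4) (Fin 4) ℝ) :
    curvatureForm R A B = ∑ a, ∑ b, ∑ c, ∑ d, q2 R R a b c d * A a b * B c d := rfl

lemma q2_eq_sum (A B : Tensor4) (a b c d : Fin 4) :
    q2 A B a b c d = ∑ p, ∑ q, A a p c q * B b p d q * gm p p * gm q q := by
  simp only [q2, gm_eq_minkowski, minkowski, diagonal_apply, mul_ite, ite_mul, mul_zero, zero_mul,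
    Finset.sum_ite_eq, Finset.mem_univ, if_true]
  refine Finset.sum_congr rfl fun p _ => Finset.sum_congr rfl fun q _ => ?_
  ring

lemma curvatureForm_eq_trace (R : Tensor4) (A B : Matrix (Fin 4) (Fin 4) ℝ) :
    curvatureForm R A B = trace ((curvatureMatrix R)ᵀ * (A ⊗ₖ minkowski 3) *
      curvatureMatrix R * (B ⊗ₖ minkowski 3)ᵀ) := by
  rw [trace_transpose_mul_mul_mul_transpose, curvatureForm_apply]
  simp only [Fintype.sum_prod_type, curvatureMatrix, of_apply, kroneckerMap_apply, q2_eq_sum,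
    gm_eq_minkowski, minkowski, diagonal_apply, mul_ite, ite_mul, mul_zero, zero_mul, if_true,
    Finset.sum_ite_eq, Finset.sum_ite_irrel, Finset.sum_const_zero, Finset.mem_univ, Finset.sum_mul]
  refine Finset.sum_congr rfl fun a _ => Eq.symm ?_
  rw [Finset.sum_comm]
  refine Finset.sum_congr rfl fun b _ => ?_
  rw [Finset.sum_comm]
  refine Finset.sum_congr rfl fun c _ => ?_
  rw [Finset.sum_comm_cycle]
  refine Finset.sum_congr rfl fun d _ => Finset.sum_congr rfl fun p _ =>
    Finset.sum_congr rfl fun q _ => ?_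
  ring

variable {R : Tensor4}

lemma q2_swap (A B : Tensor4) (a b c d : Fin 4) : q2 A B a b c d = q2 B A b a d c := by
  simp only [q2_eq_sum, mul_comm (A a _ c _)]

lemma q3_eq_sum_q2 (A B : Tensor4) (a b : Fin 4) :
    q3 A B a b = ∑ c, ∑ d, q2 A B a b c d * gm c d := by
  simp only [q3, q2_eq_sum, gm_eq_minkowski, minkowski, diagonal_apply, mul_ite, ite_mul, mul_zero,
    zero_mul, if_true, Finset.sum_ite_eq, Finset.mem_univ, Finset.sum_mul]
  rw [Finset.sum_comm]
  refine Finset.sum_congr rfl fun c _ => Finset.sum_congr rfl fun p _ =>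
    Finset.sum_congr rfl fun q _ => ?_
  ring

lemma q4_eq_sum_q3 (A B : Tensor4) : q4 A B = ∑ a, ∑ b, q3 A B a b * gm a b := by
  simp only [q3, q4, gm_eq_minkowski, minkowski, diagonal_apply, mul_ite, ite_mul, mul_zero,
    zero_mul, if_true, Finset.sum_ite_eq, Finset.mem_univ, Finset.sum_mul]
  refine Finset.sum_congr rfl fun a _ => Finset.sum_congr rfl fun p _ =>
    Finset.sum_congr rfl fun c _ => Finset.sum_congr rfl fun q _ => ?_
  ring

lemma q2_pairSymm (hR : ∀ a b c d, R a b c d = R c d a b) (a b c d : Fin 4) :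
    q2 R R a b c d = q2 R R c d a b := by
  rw [q2_eq_sum, q2_eq_sum, Finset.sum_comm]
  refine Finset.sum_congr rfl fun p _ => Finset.sum_congr rfl fun q _ => ?_
  rw [hR a, hR b, mul_right_comm]

lemma Bel_eq_of_pairSymm (hR : ∀ a b c d, R a b c d = R c d a b) (a b c d : Fin 4) :
    Bel R a b c d = q2 R R a b c d + q2 R R b a c d - 1 / 2 * (q3 R R a b * gm c d)
      - 1 / 2 * (gm a b * q3 R R c d) + 1 / 8 * q4 R R * (gm a b * gm c d) := by
  have cross_term :
      ∑ e, ∑ f, ∑ r, ∑ s, gm e r * gm f s * R b r c s * R d f a e = q2 R R b a c d := by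
    rw [q2_eq_sum]
    simp only [gm_eq_minkowski, minkowski, diagonal_apply, mul_ite, ite_mul, mul_zero,
      zero_mul, if_true, Finset.sum_ite_eq, Finset.mem_univ, hR d]
    refine Finset.sum_congr rfl fun p _ => Finset.sum_congr rfl fun q _ => ?_
    ring
  rw [Bel, cross_term]
  ring

lemma curvatureForm_minkowski_right (A : Matrix (Fin 4) (Fin 4) ℝ) :
    curvatureForm R A (minkowski 3) = ∑ a, ∑ b, q3 R R a b * A a b := by
  simp only [curvatureForm_apply, q3_eq_sum_q2, gm_eq_minkowski, Finset.sum_mul, mul_right_comm]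

lemma curvatureForm_comm (hR : ∀ a b c d, R a b c d = R c d a b)
    (A B : Matrix (Fin 4) (Fin 4) ℝ) : curvatureForm R A B = curvatureForm R B A := by
  have sum_pairs (A B : Matrix (Fin 4) (Fin 4) ℝ) : curvatureForm R A B =
      ∑ x : Fin 4 × Fin 4, ∑ y : Fin 4 × Fin 4,
        q2 R R x.1 x.2 y.1 y.2 * A x.1 x.2 * B y.1 y.2 := by
    simp only [curvatureForm_apply, Fintype.sum_prod_type]
  rw [sum_pairs, sum_pairs, Finset.sum_comm]
  refine Finset.sum_congr rfl fun y _ => Finset.sum_congr rfl fun x _ => ?_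
  rw [q2_pairSymm hR, mul_right_comm]

lemma curvatureForm_minkowski_minkowski :
    curvatureForm R (minkowski 3) (minkowski 3) = q4 R R := by
  simp only [curvatureForm_minkowski_right, q4_eq_sum_q3, gm_eq_minkowski]

lemma curvatureForm_transpose (A B : Matrix (Fin 4) (Fin 4) ℝ) :
    curvatureForm R Aᵀ Bᵀ = curvatureForm R A B := by
  simp only [curvatureForm_apply, transpose_apply]
  rw [Finset.sum_comm]
  refine Finset.sum_congr rfl fun a _ => Finset.sum_congr rfl fun b _ => ?_
  rw [Finset.sum_comm]
  simp only [q2_swap R R b]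

lemma dotProduct_minkowski_mulVec_eq_sum (u v : Fin 4 → ℝ) :
    u ⬝ᵥ minkowski 3 *ᵥ v = ∑ a, ∑ b, gm a b * u a * v b := by
  simp only [dotProduct, mulVec, gm_eq_minkowski, Finset.mul_sum, mul_comm, mul_left_comm]

lemma sum_Bel_mul_eq_curvatureForm (hR : ∀ a b c d, R a b c d = R c d a b)
    (u₁ u₂ u₃ u₄ : Fin 4 → ℝ) :
    ∑ a, ∑ b, ∑ c, ∑ d, Bel R a b c d * u₁ a * u₂ b * u₃ c * u₄ d =
      curvatureForm R (vecMulVec u₁ u₂) (vecMulVec u₃ u₄)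
        + curvatureForm R (vecMulVec u₂ u₁) (vecMulVec u₃ u₄)
        - 1 / 2 * (curvatureForm R (vecMulVec u₁ u₂) (minkowski 3) * (u₃ ⬝ᵥ minkowski 3 *ᵥ u₄))
        - 1 / 2 * ((u₁ ⬝ᵥ minkowski 3 *ᵥ u₂) * curvatureForm R (minkowski 3) (vecMulVec u₃ u₄))
        + 1 / 8 * curvatureForm R (minkowski 3) (minkowski 3) *
          ((u₁ ⬝ᵥ minkowski 3 *ᵥ u₂) * (u₃ ⬝ᵥ minkowski 3 *ᵥ u₄)) := by
  have cross_term : curvatureForm R (vecMulVec u₂ u₁) (vecMulVec u₃ u₄) =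
      ∑ a, ∑ b, ∑ c, ∑ d, q2 R R b a c d * (u₁ a * u₂ b) * (u₃ c * u₄ d) := by
    rw [curvatureForm_apply, Finset.sum_comm]
    simp only [vecMulVec_apply, mul_comm (u₁ _)]
  rw [cross_term, curvatureForm_comm hR (minkowski 3) (vecMulVec u₃ u₄),
    curvatureForm_minkowski_minkowski, curvatureForm_minkowski_right,
    curvatureForm_minkowski_right]
  simp only [curvatureForm_apply, vecMulVec_apply, dotProduct_minkowski_mulVec_eq_sum,
    Bel_eq_of_pairSymm hR, Finset.sum_mul]
  simp only [Finset.mul_sum, ← Finset.sum_add_distrib, ← Finset.sum_sub_distrib]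
  refine Finset.sum_congr rfl fun a _ => Finset.sum_congr rfl fun b _ =>
    Finset.sum_congr rfl fun c _ => Finset.sum_congr rfl fun d _ => ?_
  ring

theorem sum_Bel_mul_eq_two_mul_curvatureForm (hR : ∀ a b c d, R a b c d = R c d a b)
    (u₁ u₂ u₃ u₄ : Fin 4 → ℝ) :
    ∑ a, ∑ b, ∑ c, ∑ d, Bel R a b c d * u₁ a * u₂ b * u₃ c * u₄ d =
      2 * curvatureForm R (energyWeight u₁ u₂) (energyWeight u₃ u₄) := by
  have swap_both := curvatureForm_transpose (R := R) (vecMulVec u₁ u₂) (vecMulVec u₃ u₄)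
  have swap_fst := curvatureForm_transpose (R := R) (vecMulVec u₂ u₁) (vecMulVec u₃ u₄)
  have swap_left := curvatureForm_transpose (R := R) (vecMulVec u₁ u₂) (minkowski 3)
  have swap_right := curvatureForm_transpose (R := R) (minkowski 3) (vecMulVec u₃ u₄)
  simp only [transpose_vecMulVec, minkowski_transpose] at swap_both swap_fst swap_left swap_right
  rw [sum_Bel_mul_eq_curvatureForm hR]
  simp only [energyWeight, map_add, map_sub, map_smul, LinearMap.add_apply, LinearMap.sub_apply,
    LinearMap.smul_apply, smul_eq_mul, swap_both, swap_fst, swap_left, swap_right]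
  ring

lemma curvatureMatrix_transpose (hR : ∀ a b c d, R a b c d = R c d a b) :
    (curvatureMatrix R)ᵀ = curvatureMatrix R :=
  ext fun _ _ => hR _ _ _ _

lemma curvatureMatrix_submatrix_swap (hR : ∀ a b c d, R a b c d = -R b a c d) :
    (curvatureMatrix R).submatrix Prod.swap id = -curvatureMatrix R :=
  ext fun _ _ => hR _ _ _ _

lemma mem_futureCone_of_causal {u : Fin 4 → ℝ} (hu : ∑ a, ∑ b, gm a b * u a * u b ≤ 0)
    (hu₀ : 0 ≤ u 0) : u ∈ futureCone 3 :=
  ⟨hu₀, (dotProduct_minkowski_mulVec_eq_sum u u).trans_le hu⟩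

theorem bel_tensor_generalized_dominant_property_general
    (antisymm : ∀ a b c d, R a b c d = -R b a c d) (pairSymm : ∀ a b c d, R a b c d = R c d a b)
    {u₁ u₂ u₃ u₄ : Fin 4 → ℝ} (h₁ : u₁ ∈ futureCone 3) (h₂ : u₂ ∈ futureCone 3)
    (h₃ : u₃ ∈ futureCone 3) (h₄ : u₄ ∈ futureCone 3) :
    0 ≤ ∑ a, ∑ b, ∑ c, ∑ d, Bel R a b c d * u₁ a * u₂ b * u₃ c * u₄ d := by
  have swap_neg := curvatureMatrix_submatrix_swap antisymm
  have form_nonneg :=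
    trace_mul_energyForm_mul_energyForm_nonneg swap_neg
      (by rwa [curvatureMatrix_transpose pairSymm]) h₁ h₂ h₃ h₄
  rw [← energyForm_transpose u₃ u₄, energyForm, energyForm, ← curvatureForm_eq_trace] at form_nonneg
  rw [sum_Bel_mul_eq_two_mul_curvatureForm pairSymm]
  exact mul_nonneg two_pos.le form_nonneg

end BelTensor

/-- The Bel tensor satisfies the generalized dominant property: it is nonnegative when
contracted with four causal future-directed vectors. -/
theorem bel_tensor_generalized_dominant_property
    (R : Tensor4) (hR : RiemannSymm R)
    (u₁ u₂ u₃ u₄ : Fin 4 → ℝ)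
    (h₁0 : u₁ ≠ 0) (h₁c : (∑ a, ∑ b, gm a b * u₁ a * u₁ b) ≤ 0) (h₁f : 0 < u₁ 0)
    (h₂0 : u₂ ≠ 0) (h₂c : (∑ a, ∑ b, gm a b * u₂ a * u₂ b) ≤ 0) (h₂f : 0 < u₂ 0)
    (h₃0 : u₃ ≠ 0) (h₃c : (∑ a, ∑ b, gm a b * u₃ a * u₃ b) ≤ 0) (h₃f : 0 < u₃ 0)
    (h₄0 : u₄ ≠ 0) (h₄c : (∑ a, ∑ b, gm a b * u₄ a * u₄ b) ≤ 0) (h₄f : 0 < u₄ 0) :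
    0 ≤ ∑ a, ∑ b, ∑ c, ∑ d, Bel R a b c d * u₁ a * u₂ b * u₃ c * u₄ d := by
  exact bel_tensor_generalized_dominant_property_general hR.antisymm₁ hR.pairSymm
    (mem_futureCone_of_causal h₁c h₁f.le) (mem_futureCone_of_causal h₂c h₂f.le)
    (mem_futureCone_of_causal h₃c h₃f.le) (mem_futureCone_of_causal h₄c h₄f.le)
end
end

section
/- Let R_{abcd} have Riemann symmetries on Minkowski space and let B_{abcd} be its Bel tensor. Then the following three conditions are equivalent: (i) B_{abcd} = 0; (ii) R_{abcd} = 0; (iii) there exists a timelike vector u^a such that B_{abcd} u^a u^b u^c u^d = 0. -/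
noncomputable section

/-!
For `u` timelike with `N = g(u, u)`, flipping the sign of the Minkowski metric `g` along `u` gives a
positive definite metric `P = g - (2 / N) u ⊗ u`. In the squared norm of `R` with respect to `P`,
all terms with two factors `u ⊗ u` on the same antisymmetric pair of indices vanish, and what is
left is exactly `(8 / N²) B(u, u, u, u)`. Hence `B(u, u, u, u) = 0` forces `R = 0`.
-/

open Matrix
open scoped Kronecker

section PositiveDefinite

theorem posDef_sub_smul_vecMulVec_of_orthogonal_pos {ι : Type*} [Fintype ι] {g : Matrix ι ι ℝ}
    (hg : g.IsSymm) {w : ι → ℝ} (hw : w ⬝ᵥ g *ᵥ w < 0)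
    (h_orthogonal : ∀ x, x ≠ 0 → w ⬝ᵥ g *ᵥ x = 0 → 0 < x ⬝ᵥ g *ᵥ x) :
    (g - (2 / (w ⬝ᵥ g *ᵥ w)) • vecMulVec (g *ᵥ w) (g *ᵥ w)).PosDef := by
  set N := w ⬝ᵥ g *ᵥ w with hN
  have h_symm (x y : ι → ℝ) : x ⬝ᵥ g *ᵥ y = y ⬝ᵥ g *ᵥ x := by
    rw [← dotProduct_transpose_mulVec, hg.eq]
  refine .of_dotProduct_mulVec_pos ?_ fun x hx => ?_
  · ext i j
    simp [vecMulVec_apply, hg.apply i j, mul_comm]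
  obtain ⟨α, z, rfl, hwz⟩ : ∃ (α : ℝ) (z : ι → ℝ), x = α • w + z ∧ w ⬝ᵥ g *ᵥ z = 0 := by
    refine ⟨w ⬝ᵥ g *ᵥ x / N, x - (w ⬝ᵥ g *ᵥ x / N) • w, by abel, ?_⟩
    simp only [mulVec_sub, mulVec_smul, dotProduct_sub, dotProduct_smul, smul_eq_mul, ← hN]
    field_simp [hw.ne]
    ring
  have h_value : star (α • w + z) ⬝ᵥ
      (g - (2 / N) • vecMulVec (g *ᵥ w) (g *ᵥ w)) *ᵥ (α • w + z) =
        z ⬝ᵥ g *ᵥ z + α ^ 2 * -N := by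
    have hzw : z ⬝ᵥ g *ᵥ w = 0 := h_symm z w ▸ hwz
    simp only [star_trivial, sub_mulVec, smul_mulVec, vecMulVec_mulVec, mulVec_add, mulVec_smul,
      dotProduct_add, add_dotProduct, dotProduct_sub, dotProduct_smul, smul_dotProduct,
      dotProduct_comm (g *ᵥ w), hwz, hzw, ← hN, smul_eq_mul, op_smul_eq_smul]
    field_simp [hw.ne]
    ring
  rw [h_value]
  rcases eq_or_ne z 0 with rfl | hz
  · have hα : α ≠ 0 := by rintro rfl; simp at hx
    have := neg_pos.mpr hw
    simp only [zero_dotProduct, zero_add]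
    positivity
  · have := h_orthogonal z hz hwz
    have := neg_pos.mpr hw
    positivity

/-- The Minkowski metric `diag(-1, 1, …, 1)` of `ℝ¹⁺ⁿ`, the time axis being the index `0`. -/
def minkowskiMatrix (n : ℕ) : Matrix (Fin (n + 1)) (Fin (n + 1)) ℝ :=
  diagonal (Fin.cons (-1) 1)

variable {n : ℕ}

lemma isSymm_minkowskiMatrix : (minkowskiMatrix n).IsSymm := isSymm_diagonal _

lemma minkowskiMatrix_mulVec_mulVec (u : Fin (n + 1) → ℝ) :
    minkowskiMatrix n *ᵥ minkowskiMatrix n *ᵥ u = u := by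
  ext i
  refine Fin.cases ?_ (fun i => ?_) i <;> simp [minkowskiMatrix, mulVec_diagonal]

lemma dotProduct_minkowskiMatrix_mulVec (u v : Fin (n + 1) → ℝ) :
    u ⬝ᵥ minkowskiMatrix n *ᵥ v = Fin.tail u ⬝ᵥ Fin.tail v - u 0 * v 0 := by
  simp only [dotProduct, minkowskiMatrix, mulVec_diagonal, Fin.sum_univ_succ, Fin.cons_zero,
    Fin.cons_succ, Pi.one_apply, one_mul, Fin.tail]
  ring

theorem minkowskiMatrix_pos_of_orthogonal_timelike {u x : Fin (n + 1) → ℝ}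
    (hu : u ⬝ᵥ minkowskiMatrix n *ᵥ u < 0) (hx : x ≠ 0)
    (hux : u ⬝ᵥ minkowskiMatrix n *ᵥ x = 0) : 0 < x ⬝ᵥ minkowskiMatrix n *ᵥ x := by
  simp only [dotProduct_minkowskiMatrix_mulVec] at hu hux ⊢
  have h_cauchy : (Fin.tail u ⬝ᵥ Fin.tail x) ^ 2 ≤
      (Fin.tail u ⬝ᵥ Fin.tail u) * (Fin.tail x ⬝ᵥ Fin.tail x) := by
    simpa only [dotProduct, sq] using
      Finset.sum_mul_sq_le_sq_mul_sq Finset.univ (Fin.tail u) (Fin.tail x)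
  have h_tail_u : 0 ≤ Fin.tail u ⬝ᵥ Fin.tail u := by
    simpa using dotProduct_star_self_nonneg (Fin.tail u)
  have hu₀ : 0 < u 0 * u 0 := by linarith
  have h_tail_x : 0 < Fin.tail x ⬝ᵥ Fin.tail x := by
    suffices Fin.tail x ≠ 0 by simpa using dotProduct_star_self_pos_iff.mpr this
    intro h
    have hx₀ : x 0 = 0 := by
      simpa [h, left_ne_zero_of_mul hu₀.ne'] using hux
    exact hx (by rw [← Fin.cons_self_tail x, h, hx₀]; exact Matrix.cons_zero_zero)
  refine sub_pos.mpr (lt_of_mul_lt_mul_left ?_ hu₀.le)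
  calc u 0 * u 0 * (x 0 * x 0) = (Fin.tail u ⬝ᵥ Fin.tail x) ^ 2 := by
        rw [sub_eq_zero.mp hux]; ring
    _ ≤ (Fin.tail u ⬝ᵥ Fin.tail u) * (Fin.tail x ⬝ᵥ Fin.tail x) := h_cauchy
    _ < u 0 * u 0 * (Fin.tail x ⬝ᵥ Fin.tail x) := by gcongr; exact sub_neg.mp hu

/-- The metric `g - (2 / g(u, u)) u ⊗ u`, which agrees with the Minkowski metric `g` on the
orthogonal complement of `u` and is opposite to it along `u`; it is meaningful only for
`g(u, u) ≠ 0`. Its components are contravariant, so that they contract with those of a covariant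
tensor. -/
def signFlippedMetric (u : Fin (n + 1) → ℝ) : Matrix (Fin (n + 1)) (Fin (n + 1)) ℝ :=
  minkowskiMatrix n - (2 / (u ⬝ᵥ minkowskiMatrix n *ᵥ u)) • vecMulVec u u

theorem posDef_signFlippedMetric {u : Fin (n + 1) → ℝ}
    (hu : u ⬝ᵥ minkowskiMatrix n *ᵥ u < 0) : (signFlippedMetric u).PosDef := by
  -- `signFlippedMetric u` is the flipped covariant metric of the lowered vector, itself timelike.
  have h_lower : minkowskiMatrix n *ᵥ u ⬝ᵥ minkowskiMatrix n *ᵥ minkowskiMatrix n *ᵥ u =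
      u ⬝ᵥ minkowskiMatrix n *ᵥ u := by
    rw [minkowskiMatrix_mulVec_mulVec, dotProduct_comm]
  have h_timelike := hu
  rw [← h_lower] at h_timelike
  have h_posDef := posDef_sub_smul_vecMulVec_of_orthogonal_pos isSymm_minkowskiMatrix h_timelike
    fun _ => minkowskiMatrix_pos_of_orthogonal_timelike h_timelike
  rwa [h_lower, minkowskiMatrix_mulVec_mulVec] at h_posDef

end PositiveDefinite

section SelfContraction

variable {ι 𝕜 : Type*} [Fintype ι]

section CommSemiring

variable [CommSemiring 𝕜]

/-- The contraction `R_{abcd} R_{efgh} P₁^{ae} P₂^{bf} P₃^{cg} P₄^{dh}`, encoded as the value of the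
quadratic form `P₁ ⊗ P₂ ⊗ P₃ ⊗ P₄` at the components of `R`. -/
def selfContraction (R : ι → ι → ι → ι → 𝕜) (P₁ P₂ P₃ P₄ : Matrix ι ι 𝕜) : 𝕜 :=
  (fun x : (ι × ι) × (ι × ι) => R x.1.1 x.1.2 x.2.1 x.2.2) ⬝ᵥ
    ((P₁ ⊗ₖ P₂) ⊗ₖ (P₃ ⊗ₖ P₄)) *ᵥ fun x => R x.1.1 x.1.2 x.2.1 x.2.2

variable (R : ι → ι → ι → ι → 𝕜)

lemma selfContraction_eq_sum (P₁ P₂ P₃ P₄ : Matrix ι ι 𝕜) :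
    selfContraction R P₁ P₂ P₃ P₄ = ∑ z : ((ι × ι) × (ι × ι)) × ((ι × ι) × (ι × ι)),
      R z.1.1.1 z.1.1.2 z.1.2.1 z.1.2.2 * P₁ z.1.1.1 z.2.1.1 * P₂ z.1.1.2 z.2.1.2 *
        P₃ z.1.2.1 z.2.2.1 * P₄ z.1.2.2 z.2.2.2 * R z.2.1.1 z.2.1.2 z.2.2.1 z.2.2.2 := by
  simp only [selfContraction, dotProduct, mulVec, kroneckerMap_apply, Finset.mul_sum, mul_assoc,
    ← Fintype.sum_prod_type']

lemma selfContraction_add_smul_first (A B P₂ P₃ P₄ : Matrix ι ι 𝕜) (c : 𝕜) :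
    selfContraction R (A + c • B) P₂ P₃ P₄ =
      selfContraction R A P₂ P₃ P₄ + c * selfContraction R B P₂ P₃ P₄ := by
  simp only [selfContraction, add_kronecker, smul_kronecker, add_mulVec, smul_mulVec,
    dotProduct_add, dotProduct_smul, smul_eq_mul]

lemma selfContraction_add_smul_second (P₁ A B P₃ P₄ : Matrix ι ι 𝕜) (c : 𝕜) :
    selfContraction R P₁ (A + c • B) P₃ P₄ =
      selfContraction R P₁ A P₃ P₄ + c * selfContraction R P₁ B P₃ P₄ := by
  simp only [selfContraction, add_kronecker, kronecker_add, smul_kronecker, kronecker_smul,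
    add_mulVec, smul_mulVec, dotProduct_add, dotProduct_smul, smul_eq_mul]

variable {R} in
lemma selfContraction_swap_pairs (h_pair : ∀ a b c d, R a b c d = R c d a b)
    (P₁ P₂ P₃ P₄ : Matrix ι ι 𝕜) :
    selfContraction R P₁ P₂ P₃ P₄ = selfContraction R P₃ P₄ P₁ P₂ := by
  simp only [selfContraction_eq_sum]
  refine Fintype.sum_equiv ((Equiv.prodComm _ _).prodCongr (Equiv.prodComm _ _)) _ _ fun z => ?_
  rw [h_pair z.1.1.1, h_pair z.2.1.1]
  simp only [Equiv.prodCongr_apply, Prod.map, Equiv.prodComm_apply, Prod.swap]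
  ring

end CommSemiring

variable [CommRing 𝕜] {R : ι → ι → ι → ι → 𝕜}

lemma selfContraction_swap_first_second (h_antisymm : ∀ a b c d, R a b c d = -R b a c d)
    (P₁ P₂ P₃ P₄ : Matrix ι ι 𝕜) :
    selfContraction R P₁ P₂ P₃ P₄ = selfContraction R P₂ P₁ P₃ P₄ := by
  let swap : (ι × ι) × (ι × ι) ≃ (ι × ι) × (ι × ι) := (Equiv.prodComm _ _).prodCongr (.refl _)
  simp only [selfContraction_eq_sum]
  refine Fintype.sum_equiv (swap.prodCongr swap) _ _ fun z => ?_
  rw [h_antisymm z.1.1.1, h_antisymm z.2.1.1]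
  simp only [swap, Equiv.prodCongr_apply, Prod.map, Equiv.prodComm_apply, Prod.swap,
    Equiv.refl_apply]
  ring

lemma selfContraction_vecMulVec_vecMulVec [IsAddTorsionFree 𝕜]
    (h_antisymm : ∀ a b c d, R a b c d = -R b a c d) (u v w : ι → 𝕜) (P₃ P₄ : Matrix ι ι 𝕜) :
    selfContraction R (vecMulVec u v) (vecMulVec u w) P₃ P₄ = 0 := by
  let swap : (ι × ι) × (ι × ι) ≃ (ι × ι) × (ι × ι) := (Equiv.prodComm _ _).prodCongr (.refl _)
  refine self_eq_neg.mp ?_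
  simp only [selfContraction_eq_sum, ← Finset.sum_neg_distrib]
  refine Fintype.sum_equiv (swap.prodCongr (.refl _)) _ _ fun z => ?_
  rw [h_antisymm z.1.1.1]
  simp only [swap, Equiv.prodCongr_apply, Prod.map, Equiv.prodComm_apply, Prod.swap,
    Equiv.refl_apply, vecMulVec_apply]
  ring

lemma selfContraction_add_smul_vecMulVec_first_pair [IsAddTorsionFree 𝕜]
    (h_antisymm : ∀ a b c d, R a b c d = -R b a c d) (G P₃ P₄ : Matrix ι ι 𝕜) (u : ι → 𝕜) (c : 𝕜) :
    selfContraction R (G + c • vecMulVec u u) (G + c • vecMulVec u u) P₃ P₄ =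
      selfContraction R G G P₃ P₄ + 2 * c * selfContraction R (vecMulVec u u) G P₃ P₄ := by
  rw [selfContraction_add_smul_first, selfContraction_add_smul_second,
    selfContraction_add_smul_second, selfContraction_vecMulVec_vecMulVec h_antisymm,
    selfContraction_swap_first_second h_antisymm G (vecMulVec u u)]
  ring

theorem selfContraction_add_smul_vecMulVec [IsAddTorsionFree 𝕜]
    (h_antisymm : ∀ a b c d, R a b c d = -R b a c d)
    (h_pair : ∀ a b c d, R a b c d = R c d a b) (G : Matrix ι ι 𝕜) (u : ι → 𝕜) (c : 𝕜) :
    selfContraction R (G + c • vecMulVec u u) (G + c • vecMulVec u u)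
        (G + c • vecMulVec u u) (G + c • vecMulVec u u) =
      selfContraction R G G G G + 4 * c * selfContraction R (vecMulVec u u) G G G +
        4 * c ^ 2 * selfContraction R (vecMulVec u u) G (vecMulVec u u) G := by
  have h_expand := selfContraction_add_smul_vecMulVec_first_pair h_antisymm G (u := u) (c := c)
  rw [h_expand, selfContraction_swap_pairs h_pair G G, h_expand,
    selfContraction_swap_pairs h_pair (vecMulVec u u) G (G + c • vecMulVec u u), h_expand,
    selfContraction_swap_pairs h_pair G G (vecMulVec u u) G]
  ring

end SelfContraction

theorem eq_zero_of_selfContraction_eq_zero {ι : Type*} [Fintype ι] {R : ι → ι → ι → ι → ℝ}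
    {P₁ P₂ P₃ P₄ : Matrix ι ι ℝ} (h₁ : P₁.PosDef) (h₂ : P₂.PosDef) (h₃ : P₃.PosDef) (h₄ : P₄.PosDef)
    (h_zero : selfContraction R P₁ P₂ P₃ P₄ = 0) (a b c d : ι) : R a b c d = 0 := by
  by_contra h_ne
  have h_components : (fun x : (ι × ι) × (ι × ι) => R x.1.1 x.1.2 x.2.1 x.2.2) ≠ 0 :=
    fun h => h_ne (congrFun h ((a, b), (c, d)))
  exact (((h₁.kronecker h₂).kronecker (h₃.kronecker h₄)).dotProduct_mulVec_pos h_components).ne'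
    h_zero

section Bel

local notation "g₄" => minkowskiMatrix 3

variable {R : Tensor4}

lemma bel_eq_of_pairSymm (h_pair : ∀ a b c d, R a b c d = R c d a b) (a b c d : Fin 4) :
    Bel R a b c d = q2 R R a b c d + q2 R R a b d c - (1 / 2) * gm c d * q3 R R a b
      - (1 / 2) * gm a b * q3 R R c d + (1 / 8) * gm a b * gm c d * q4 R R := by
  have h_q2 : ∑ e, ∑ f, ∑ r, ∑ s, gm e r * gm f s * R b r c s * R d f a e = q2 R R a b d c := by
    unfold q2
    refine Finset.sum_congr rfl fun _ _ => Finset.sum_congr rfl fun _ _ =>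
      Finset.sum_congr rfl fun _ _ => Finset.sum_congr rfl fun _ _ => ?_
    rw [h_pair d]
    ring
  rw [Bel, h_q2]
  ring

lemma gm_eq_minkowskiMatrix (a b : Fin 4) : gm a b = g₄ a b := by
  fin_cases a <;> fin_cases b <;> simp [gm, minkowskiMatrix] <;> rfl

lemma sum_gm_mul_eq_dotProduct (u : Fin 4 → ℝ) : ∑ a, ∑ b, gm a b * u a * u b = u ⬝ᵥ g₄ *ᵥ u := by
  simp only [dotProduct, mulVec, Finset.mul_sum, gm_eq_minkowskiMatrix]
  exact Finset.sum_congr rfl fun _ _ => Finset.sum_congr rfl fun _ _ => by ring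

variable (R) (u : Fin 4 → ℝ)

lemma sum_q2_mul_eq_selfContraction :
    ∑ a, ∑ b, ∑ c, ∑ d, q2 R R a b c d * u a * u b * u c * u d =
      selfContraction R (vecMulVec u u) g₄ (vecMulVec u u) g₄ := by
  let reindex : Fin 4 × Fin 4 × Fin 4 × Fin 4 × Fin 4 × Fin 4 × Fin 4 × Fin 4 ≃
      ((Fin 4 × Fin 4) × (Fin 4 × Fin 4)) × ((Fin 4 × Fin 4) × (Fin 4 × Fin 4)) :=
    ⟨fun ⟨a, b, c, d, p, q, r, s⟩ => (((a, p), (c, q)), ((b, r), (d, s))),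
     fun ⟨⟨⟨a, p⟩, ⟨c, q⟩⟩, ⟨⟨b, r⟩, ⟨d, s⟩⟩⟩ => (a, b, c, d, p, q, r, s),
     fun _ => rfl, fun _ => rfl⟩
  rw [selfContraction_eq_sum, ← reindex.sum_comp]
  simp only [Fintype.sum_prod_type, q2, Finset.sum_mul]
  repeat refine Finset.sum_congr rfl fun _ _ => ?_
  simp only [reindex, Equiv.coe_fn_mk, vecMulVec_apply, gm_eq_minkowskiMatrix]
  ring

lemma sum_q3_mul_eq_selfContraction :
    ∑ a, ∑ b, q3 R R a b * u a * u b = selfContraction R (vecMulVec u u) g₄ g₄ g₄ := by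
  let reindex : Fin 4 × Fin 4 × Fin 4 × Fin 4 × Fin 4 × Fin 4 × Fin 4 × Fin 4 ≃
      ((Fin 4 × Fin 4) × (Fin 4 × Fin 4)) × ((Fin 4 × Fin 4) × (Fin 4 × Fin 4)) :=
    ⟨fun ⟨a, b, e, f, p, r, s, t⟩ => (((a, e), (f, p)), ((b, r), (s, t))),
     fun ⟨⟨⟨a, e⟩, ⟨f, p⟩⟩, ⟨⟨b, r⟩, ⟨s, t⟩⟩⟩ => (a, b, e, f, p, r, s, t),
     fun _ => rfl, fun _ => rfl⟩
  rw [selfContraction_eq_sum, ← reindex.sum_comp]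
  simp only [Fintype.sum_prod_type, q3, Finset.sum_mul]
  repeat refine Finset.sum_congr rfl fun _ _ => ?_
  simp only [reindex, Equiv.coe_fn_mk, vecMulVec_apply, gm_eq_minkowskiMatrix]
  ring

lemma q4_self_eq_selfContraction : q4 R R = selfContraction R g₄ g₄ g₄ g₄ := by
  simp only [q4, selfContraction_eq_sum, Fintype.sum_prod_type, gm_eq_minkowskiMatrix]

variable {R}

theorem sum_bel_mul_eq_selfContraction_minkowskiMatrix (h_pair : ∀ a b c d, R a b c d = R c d a b) :
    ∑ a, ∑ b, ∑ c, ∑ d, Bel R a b c d * u a * u b * u c * u d =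
      2 * selfContraction R (vecMulVec u u) g₄ (vecMulVec u u) g₄
        - (u ⬝ᵥ g₄ *ᵥ u) * selfContraction R (vecMulVec u u) g₄ g₄ g₄
        + (1 / 8) * (u ⬝ᵥ g₄ *ᵥ u) ^ 2 * selfContraction R g₄ g₄ g₄ g₄ := by
  have h_expand (a b c d : Fin 4) : Bel R a b c d * u a * u b * u c * u d =
      q2 R R a b c d * u a * u b * u c * u d + q2 R R a b d c * u a * u b * u d * u c
        - 1 / 2 * ((q3 R R a b * u a * u b) * (gm c d * u c * u d))
        - 1 / 2 * ((gm a b * u a * u b) * (q3 R R c d * u c * u d))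
        + 1 / 8 * q4 R R * ((gm a b * u a * u b) * (gm c d * u c * u d)) := by
    rw [bel_eq_of_pairSymm h_pair]
    ring
  have h_swap : ∑ a, ∑ b, ∑ c, ∑ d, q2 R R a b d c * u a * u b * u d * u c =
      ∑ a, ∑ b, ∑ c, ∑ d, q2 R R a b c d * u a * u b * u c * u d :=
    Finset.sum_congr rfl fun _ _ => Finset.sum_congr rfl fun _ _ => Finset.sum_comm
  simp only [h_expand, Finset.sum_add_distrib, Finset.sum_sub_distrib]
  rw [h_swap, sum_q2_mul_eq_selfContraction]
  simp only [← Finset.mul_sum, ← Finset.sum_mul, sum_q3_mul_eq_selfContraction,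
    sum_gm_mul_eq_dotProduct, q4_self_eq_selfContraction]
  ring

theorem sum_bel_mul_eq_selfContraction_signFlippedMetric
    (h_antisymm : ∀ a b c d, R a b c d = -R b a c d)
    (h_pair : ∀ a b c d, R a b c d = R c d a b) (hu : u ⬝ᵥ g₄ *ᵥ u ≠ 0) :
    ∑ a, ∑ b, ∑ c, ∑ d, Bel R a b c d * u a * u b * u c * u d =
      (u ⬝ᵥ g₄ *ᵥ u) ^ 2 / 8 *
        selfContraction R (signFlippedMetric u) (signFlippedMetric u)
          (signFlippedMetric u) (signFlippedMetric u) := by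
  simp only [signFlippedMetric, sub_eq_add_neg, ← neg_smul]
  rw [selfContraction_add_smul_vecMulVec h_antisymm h_pair,
    sum_bel_mul_eq_selfContraction_minkowskiMatrix u h_pair]
  field_simp
  ring

theorem eq_zero_of_sum_bel_mul_eq_zero (h_antisymm : ∀ a b c d, R a b c d = -R b a c d)
    (h_pair : ∀ a b c d, R a b c d = R c d a b) {u : Fin 4 → ℝ}
    (hu : ∑ a, ∑ b, gm a b * u a * u b < 0)
    (h_bel : ∑ a, ∑ b, ∑ c, ∑ d, Bel R a b c d * u a * u b * u c * u d = 0) (a b c d : Fin 4) :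
    R a b c d = 0 := by
  rw [sum_gm_mul_eq_dotProduct] at hu
  rw [sum_bel_mul_eq_selfContraction_signFlippedMetric u h_antisymm h_pair hu.ne] at h_bel
  have h_norm := (mul_eq_zero.mp h_bel).resolve_left (div_ne_zero (pow_ne_zero 2 hu.ne) (by simp))
  have h_posDef := posDef_signFlippedMetric hu
  exact eq_zero_of_selfContraction_eq_zero h_posDef h_posDef h_posDef h_posDef h_norm a b c d

end Bel

theorem bel_tensor_vanishing_characterization_general (R : Tensor4)
    (h_antisymm : ∀ a b c d, R a b c d = -R b a c d)
    (h_pair : ∀ a b c d, R a b c d = R c d a b) :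
    ((∀ a b c d, Bel R a b c d = 0) ↔ (∀ a b c d, R a b c d = 0)) ∧
    ((∀ a b c d, R a b c d = 0) ↔
      (∃ u : Fin 4 → ℝ, (∑ a, ∑ b, gm a b * u a * u b) < 0 ∧
        (∑ a, ∑ b, ∑ c, ∑ d, Bel R a b c d * u a * u b * u c * u d) = 0)) := by
  obtain ⟨t, ht⟩ : ∃ t : Fin 4 → ℝ, ∑ a, ∑ b, gm a b * t a * t b < 0 :=
    ⟨Pi.single 0 1, by simp [gm, Fin.sum_univ_four]⟩
  have h_riemann (u : Fin 4 → ℝ) (hu : ∑ a, ∑ b, gm a b * u a * u b < 0) :=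
    eq_zero_of_sum_bel_mul_eq_zero h_antisymm h_pair hu
  have h_bel (hR : ∀ a b c d, R a b c d = 0) (a b c d : Fin 4) : Bel R a b c d = 0 := by
    simp [Bel, q2, q3, q4, hR]
  exact ⟨⟨fun h => h_riemann t ht (by simp [h]), h_bel⟩,
    ⟨fun hR => ⟨t, ht, by simp [h_bel hR]⟩, fun ⟨u, hu, h⟩ => h_riemann u hu h⟩⟩

/-- The Bel tensor vanishes iff the Riemann tensor vanishes, iff its total contraction
with some timelike vector vanishes. -/
theorem bel_tensor_vanishing_characterization
    (R : Tensor4) (hR : RiemannSymm R) :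
    ((∀ a b c d, Bel R a b c d = 0) ↔ (∀ a b c d, R a b c d = 0)) ∧
    ((∀ a b c d, R a b c d = 0) ↔
      (∃ u : Fin 4 → ℝ, (∑ a, ∑ b, gm a b * u a * u b) < 0 ∧
        (∑ a, ∑ b, ∑ c, ∑ d, Bel R a b c d * u a * u b * u c * u d) = 0)) :=
  bel_tensor_vanishing_characterization_general R hR.antisymm₁ hR.pairSymm
end
end
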